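/- arXiv:2510.17680 — 3 statements merged into one kernel-verified Lean document; each statement's English description precedes it below -/
import Mathlib

section
/- Let Ω ⊂ ℝ^d be a bounded open domain, let k ∈ C^q(Ω̄ × Ω̄) and f ∈ C^q(Ω̄) with q ≥ 1, and let λ ∈ ℝ, λ ≠ 0, not belong to the spectrum of the integral operator K. Suppose the quadrature scheme {(Y_h⃗, w_h⃗)} is stable (with constant C_Q) and convergent with order q_w, 0 < q_w ≤ q (with constant C_w), and the reconstruction scheme {(X_h⃗, Y_h⃗, R_h⃗)} is stable and convergent with order q_R, 0 < q_R ≤ q (with constant C_R). Then for all sufficiently small pairs h⃗ = (h_X, h_Y) with h_X, h_Y > 0, the linear system (λ I_h⃗ − K_h⃗ W_h⃗ R_h⃗) û_h⃗ = f|_{X_h⃗} has a unique solution, the condition number of the system matrix A_h⃗ = λ I_h⃗ − K_h⃗ W_h⃗ R_h⃗ in the ∞-norm is bounded independently of h⃗, and there exists a constant C > 0 such that the Nyström interpolant u_h⃗ satisfies ‖u − u_h⃗‖_∞ ≤ C ( C_w · max_{x∈Ω̄} ‖k(x,·)‖_{C^q(Ω̄)} · h_Y^{q_w} + C_Q C_R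 ‖k‖_{C^0(Ω̄×Ω̄)} · h_X^{q_R} ) ‖u‖_{C^q(Ω̄)}, where u is the exact solution of (λI − K)u = f. -/
/-!
The discretised operator `K_h v (x) = ∑ i, w i * k x (Y i) * (R v) i` sends nodal vectors to
functions on `closure Ω`, and the system matrix acts by `v ↦ (lam v i - (K_h v)(X i))_i`. The
argument is consistency plus stability.

*Consistency* (`exists_consistency`). For `v` in `C^q`, the difference of `K v` and `K_h` applied
to the nodal values of `v` splits into the quadrature error for `k(x,·) v`, estimated by the
Leibniz rule in the `C^q` norm, and the weighted reconstruction error of `v`. Uniformly in `x` it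
is at most `ε ‖v‖_{C^q}`, where `ε` is, up to a constant, the bracket in the error estimate.

*Stability* (`exists_stability`). For a nodal vector `v` with residual `r = A v`, the function
`s = K_h v` is a combination of kernel slices `k(·, Y i)`, hence of class `C^q` with
`‖s‖_{C^q} = O(‖v‖_∞)` by stability of quadrature and reconstruction. Applying `K_h` to
`lam v = s|_X + r` gives `lam s - K_h s|_X = K_h r`, so by consistency
`‖(lam - K) s‖_∞ ≤ O(‖r‖_∞) + ε O(‖v‖_∞)`. As `lam - K` is a bounded bijection of the Banach space
`C(closure Ω)`, the open mapping theorem (`exists_inv_bound`) bounds `s`, hence `v`; for small `ε`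
the term in `v` is absorbed and `‖v‖_∞ ≤ C ‖A v‖_∞`. This yields invertibility of `A`, the bound for
`A⁻¹`, and with the trivial bound for `A` the bound for the condition number.

*Error.* The exact solution is of class `C^q` because `u = lam⁻¹ (f + K u)`. The nodal error solves
the discrete system with the consistency error of `u` as data, so stability bounds it, and the
interpolant inherits the estimate. The factors on the right-hand side are nonnegative because
`Cw` and `CR` bound errors for the constant function `1`.

Membership in `C^q(Ω̄)` is handled through families, indexed by lists of directions, of continuous
extensions to `closure Ω` of iterated partial derivatives (`IsFam`, and `IsKFam` for kernels).
These are stable under sums, products and integration in a parameter, and for a kernel the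
differentiation rule extends to parameters on the boundary of `Ω`, where nodes may lie.
-/

open MeasureTheory Set Filter Topology

noncomputable section

abbrev Euc (d : ℕ) := EuclideanSpace ℝ (Fin d)

/-- First-order partial derivative in coordinate direction `i`. -/
noncomputable def pd {d : ℕ} (i : Fin d) (f : Euc d → ℝ) : Euc d → ℝ :=
  fun x => fderiv ℝ f x (EuclideanSpace.single i (1 : ℝ))

/-- Multi-index partial derivative `∂^α`. -/
noncomputable def mpd {d : ℕ} (α : Fin d → ℕ) (f : Euc d → ℝ) : Euc d → ℝ :=
  ((List.finRange d).foldr (fun i g => (pd i)^[α i] ∘ g) id) f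

/-- Membership in `C^q(Ω̄)`: `f` is `C^q` on `Ω`, continuous up to the boundary, and all
partial derivatives of order at most `q` extend continuously to `closure Ω`. -/
def MemCq {d : ℕ} (Ω : Set (Euc d)) (q : ℕ) (f : Euc d → ℝ) : Prop :=
  ContDiffOn ℝ (q : ℕ∞) f Ω ∧ ContinuousOn f (closure Ω) ∧
  ∀ α : Fin d → ℕ, (∑ i, α i) ≤ q →
    ∃ g : Euc d → ℝ, ContinuousOn g (closure Ω) ∧ Set.EqOn g (mpd α f) Ω

/-- The `C^q(Ω̄)` norm: `‖f‖_{C^q} = ∑_{|α| ≤ q} (1/α!) ‖∂^α f‖_∞`. -/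
noncomputable def CqNorm {d : ℕ} (Ω : Set (Euc d)) (q : ℕ) (f : Euc d → ℝ) : ℝ :=
  ∑ α : Fin d → Fin (q + 1),
    if (∑ i, (α i : ℕ)) ≤ q then
      (∏ i, (Nat.factorial (α i) : ℝ))⁻¹ *
        sSup ((fun x => |mpd (fun i => (α i : ℕ)) f x|) '' Ω)
    else 0

/-- The sup norm `‖f‖_∞ = max_{x ∈ Ω̄} |f x|`. -/
noncomputable def supNorm {d : ℕ} (Ω : Set (Euc d)) (f : Euc d → ℝ) : ℝ :=
  sSup ((fun x => |f x|) '' closure Ω)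

/-- Mixed partial derivative `∂_x^α ∂_y^β` of a kernel. -/
noncomputable def mpd2 {d : ℕ} (α β : Fin d → ℕ) (k : Euc d → Euc d → ℝ) :
    Euc d → Euc d → ℝ :=
  fun x y => mpd α (fun x' => mpd β (k x') y) x

/-- Membership in `C^q(Ω̄ × Ω̄)` for kernels. -/
def MemCq2 {d : ℕ} (Ω : Set (Euc d)) (q : ℕ) (k : Euc d → Euc d → ℝ) : Prop :=
  ContDiffOn ℝ (q : ℕ∞) (fun p : Euc d × Euc d => k p.1 p.2) (Ω ×ˢ Ω) ∧
  ContinuousOn (fun p : Euc d × Euc d => k p.1 p.2) (closure Ω ×ˢ closure Ω) ∧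
  ∀ α β : Fin d → ℕ, (∑ i, α i) + (∑ i, β i) ≤ q →
    ∃ g : Euc d → Euc d → ℝ,
      ContinuousOn (fun p : Euc d × Euc d => g p.1 p.2) (closure Ω ×ˢ closure Ω) ∧
      ∀ x ∈ Ω, ∀ y ∈ Ω, g x y = mpd2 α β k x y

/-! ### Iterated partial derivatives -/

/-- The linear functional with coordinate vector `c`. -/
def gradL {d : ℕ} (c : Fin d → ℝ) : Euc d →L[ℝ] ℝ :=
  ∑ j, c j • (EuclideanSpace.proj j : Euc d →L[ℝ] ℝ)

/-- Iterated partial derivative along a list of coordinate directions; the head of the list is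
the direction differentiated last. -/
def itp {d : ℕ} (L : List (Fin d)) (f : Euc d → ℝ) : Euc d → ℝ := L.foldr pd f

/-- The sorted list of directions in which `i` occurs `α i` times. -/
def idxList {d : ℕ} (α : Fin d → ℕ) : List (Fin d) :=
  (List.finRange d).flatMap fun i => List.replicate (α i) i

section Calculus

variable {d : ℕ}

lemma gradL_single (c : Fin d → ℝ) (i : Fin d) :
    gradL c (EuclideanSpace.single i (1 : ℝ)) = c i := by
  simp [gradL]

lemma eq_gradL (T : Euc d →L[ℝ] ℝ) :
    T = gradL fun i => T (EuclideanSpace.single i (1 : ℝ)) := by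
  refine ContinuousLinearMap.coe_injective
    ((EuclideanSpace.basisFun (Fin d) ℝ).toBasis.ext fun i => ?_)
  simp [gradL_single]

lemma gradL_apply (c : Fin d → ℝ) (v : Euc d) : gradL c v = ∑ j, c j * v j := by
  simp [gradL]

lemma norm_gradL_le (c : Fin d → ℝ) : ‖gradL c‖ ≤ ∑ j, |c j| := by
  refine ContinuousLinearMap.opNorm_le_bound _ (Finset.sum_nonneg fun _ _ => abs_nonneg _) ?_
  intro v
  rw [gradL_apply, Finset.sum_mul]
  refine (norm_sum_le _ _).trans (Finset.sum_le_sum fun j _ => ?_)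
  rw [norm_mul, Real.norm_eq_abs]
  exact mul_le_mul_of_nonneg_left (PiLp.norm_apply_le v j) (abs_nonneg _)

lemma gradL_sub (a b : Fin d → ℝ) : gradL a - gradL b = gradL (fun j => a j - b j) := by
  ext v
  simp [gradL_apply, sub_mul]

lemma hasFDerivAt_pd {f : Euc d → ℝ} {x : Euc d} (h : DifferentiableAt ℝ f x) :
    HasFDerivAt f (gradL fun j => pd j f x) x := by
  have h1 := h.hasFDerivAt
  rw [eq_gradL (fderiv ℝ f x)] at h1
  exact h1

lemma pd_eq_of_hasFDerivAt {f : Euc d → ℝ} {x : Euc d} {c : Fin d → ℝ}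
    (h : HasFDerivAt f (gradL c) x) (i : Fin d) : pd i f x = c i := by
  rw [pd, h.fderiv, gradL_single]

lemma pd_congr {Ω : Set (Euc d)} (hΩ : IsOpen Ω) {f g : Euc d → ℝ} (h : EqOn f g Ω) (i : Fin d) :
    EqOn (pd i f) (pd i g) Ω := by
  intro x hx
  have : f =ᶠ[𝓝 x] g := h.eventuallyEq_of_mem (hΩ.mem_nhds hx)
  rw [pd, pd, this.fderiv_eq]

lemma itp_congr {Ω : Set (Euc d)} (hΩ : IsOpen Ω) {f g : Euc d → ℝ} (h : EqOn f g Ω)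
    (L : List (Fin d)) : EqOn (itp L f) (itp L g) Ω := by
  induction L with
  | nil => exact h
  | cons i L ih => exact pd_congr hΩ ih i

lemma pd_contDiffOn {Ω : Set (Euc d)} (hΩ : IsOpen Ω) {f : Euc d → ℝ} {n : ℕ}
    (h : ContDiffOn ℝ ((n + 1 : ℕ) : ℕ∞) f Ω) (i : Fin d) :
    ContDiffOn ℝ (n : ℕ∞) (pd i f) Ω := by
  have h1 : ContDiffOn ℝ (n : ℕ∞) (fderiv ℝ f) Ω :=
    h.fderiv_of_isOpen hΩ (by norm_cast)
  exact h1.clm_apply contDiffOn_const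

lemma itp_contDiffOn {Ω : Set (Euc d)} (hΩ : IsOpen Ω) {f : Euc d → ℝ} (L : List (Fin d)) :
    ∀ n m : ℕ, L.length + m ≤ n → ContDiffOn ℝ (n : ℕ∞) f Ω →
      ContDiffOn ℝ (m : ℕ∞) (itp L f) Ω := by
  induction L with
  | nil =>
    intro n m h hf
    exact hf.of_le (by simp at h; exact_mod_cast h)
  | cons i L ih =>
    intro n m h hf
    refine pd_contDiffOn hΩ (ih n (m + 1) ?_ hf) i
    simp only [List.length_cons] at h
    omega

/-- Symmetry of second derivatives in terms of partial derivatives. -/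
lemma pd_comm {Ω : Set (Euc d)} (hΩ : IsOpen Ω) {f : Euc d → ℝ}
    (h : ContDiffOn ℝ ((2 : ℕ) : ℕ∞) f Ω) (i j : Fin d) :
    EqOn (pd i (pd j f)) (pd j (pd i f)) Ω := by
  intro x hx
  have hc : ContDiffAt ℝ 2 f x := by
    have := h.contDiffAt (hΩ.mem_nhds hx)
    exact_mod_cast this
  have hs := hc.isSymmSndFDerivAt (by simp)
  have hd : DifferentiableAt ℝ (fderiv ℝ f) x :=
    (hc.fderiv_right (m := 1) (by norm_num)).differentiableAt (by norm_num)
  have key : ∀ a b : Fin d, pd a (pd b f) x =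
      fderiv ℝ (fderiv ℝ f) x (EuclideanSpace.single a (1 : ℝ))
        (EuclideanSpace.single b (1 : ℝ)) := by
    intro a b
    have : HasFDerivAt (pd b f) _ x :=
      (hd.hasFDerivAt).clm_apply (hasFDerivAt_const (EuclideanSpace.single b (1 : ℝ)) x)
    rw [pd, this.fderiv]
    simp
  rw [key, key]
  exact hs _ _

/-- Iterated partial derivatives do not depend on the order of the directions. -/
lemma itp_perm {Ω : Set (Euc d)} (hΩ : IsOpen Ω) {f : Euc d → ℝ} {n : ℕ}
    (hf : ContDiffOn ℝ (n : ℕ∞) f Ω) {L M : List (Fin d)} (h : L.Perm M) :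
    L.length ≤ n → EqOn (itp L f) (itp M f) Ω := by
  induction h with
  | nil => intro _ x _; rfl
  | cons i h ih =>
    intro hl
    exact pd_congr hΩ (ih (by simp at hl; omega)) i
  | swap i j L =>
    intro hl
    simp only [List.length_cons] at hl
    exact pd_comm hΩ (itp_contDiffOn hΩ L n 2 (by omega) hf) j i
  | trans h1 h2 ih1 ih2 =>
    intro hl
    exact (ih1 hl).trans (ih2 (h1.length_eq ▸ hl))

lemma itp_append (L M : List (Fin d)) (f : Euc d → ℝ) : itp (L ++ M) f = itp L (itp M f) := by
  simp [itp]

lemma itp_replicate (n : ℕ) (i : Fin d) (f : Euc d → ℝ) :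
    itp (List.replicate n i) f = (pd i)^[n] f := by
  induction n with
  | zero => rfl
  | succ n ih =>
    rw [Function.iterate_succ_apply', ← ih]
    rfl

lemma mpd_eq_itp (α : Fin d → ℕ) (f : Euc d → ℝ) : mpd α f = itp (idxList α) f := by
  have : ∀ l : List (Fin d), (l.foldr (fun i g => (pd i)^[α i] ∘ g) id) f =
      itp (l.flatMap fun i => List.replicate (α i) i) f := by
    intro l
    induction l with
    | nil => rfl
    | cons a l ih =>
      simp only [List.foldr_cons, List.flatMap_cons, Function.comp_apply]
      rw [ih, itp_append, itp_replicate]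
  exact this _

lemma count_idxList (α : Fin d → ℕ) (i : Fin d) : (idxList α).count i = α i := by
  rw [idxList, List.count_flatMap]
  have h1 : (List.count i ∘ fun j => List.replicate (α j) j) =
      fun j => if i = j then α i else 0 := by
    funext j
    by_cases h : i = j
    · subst h; simp
    · simp [List.count_replicate, h, Ne.symm h]
  rw [h1, ← List.ofFn_eq_map, List.sum_ofFn]
  simp

lemma length_idxList (α : Fin d → ℕ) : (idxList α).length = ∑ i, α i := by
  rw [idxList, List.length_flatMap]
  simp only [List.length_replicate]
  rw [← List.ofFn_eq_map, List.sum_ofFn]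

lemma perm_idxList_count (L : List (Fin d)) : L.Perm (idxList fun i => L.count i) := by
  rw [List.perm_iff_count]
  intro i
  rw [count_idxList]

lemma sum_count (L : List (Fin d)) : ∑ i, L.count i = L.length := by
  rw [(perm_idxList_count L).length_eq, length_idxList]

lemma idxList_zero : idxList (fun _ : Fin d => 0) = [] := by
  simp [idxList]

lemma mpd_zero (f : Euc d → ℝ) : mpd (fun _ => 0) f = f := by
  rw [mpd_eq_itp, idxList_zero]
  rfl

lemma itp_eq_mpd_count {Ω : Set (Euc d)} (hΩ : IsOpen Ω) {f : Euc d → ℝ} {n : ℕ}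
    (hf : ContDiffOn ℝ (n : ℕ∞) f Ω) {L : List (Fin d)} (h : L.length ≤ n) :
    EqOn (itp L f) (mpd (fun i => L.count i) f) Ω := by
  rw [mpd_eq_itp]
  exact itp_perm hΩ hf (perm_idxList_count L) h

end Calculus

/-! ### Families of extended derivatives -/

/-- `φ` is a compatible family of continuous extensions to `closure Ω` of the iterated partial
derivatives of `f` of order at most `q`: `φ []` is `f`, and `φ (j :: L)` is the `j`-th partial
derivative of `φ L` on `Ω`. -/
structure IsFam {d : ℕ} (Ω : Set (Euc d)) (q : ℕ) (f : Euc d → ℝ)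
    (φ : List (Fin d) → Euc d → ℝ) : Prop where
  eq : EqOn f (φ []) (closure Ω)
  cont : ∀ L, L.length ≤ q → ContinuousOn (φ L) (closure Ω)
  deriv : ∀ L, L.length < q → ∀ x ∈ Ω, HasFDerivAt (φ L) (gradL fun j => φ (j :: L) x) x

/-- `Γ` is a family of jointly continuous extensions to `closure Ω × closure Ω` of the partial
derivatives of `κ` with respect to its second argument, of order at most `q`. The
differentiation rule is required for parameters in the closure of `Ω`, boundary included. -/
structure IsKFam {d : ℕ} (Ω : Set (Euc d)) (q : ℕ) (κ : Euc d → Euc d → ℝ)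
    (Γ : List (Fin d) → Euc d → Euc d → ℝ) : Prop where
  eq : Γ [] = κ
  cont : ∀ L, L.length ≤ q →
    ContinuousOn (fun p : Euc d × Euc d => Γ L p.1 p.2) (closure Ω ×ˢ closure Ω)
  deriv : ∀ L, L.length < q → ∀ x ∈ closure Ω, ∀ y ∈ Ω,
    HasFDerivAt (Γ L x) (gradL fun j => Γ (j :: L) x y) y

/-- All ways to distribute the entries of a list over two lists, preserving the order. These
index the terms of the Leibniz rule. -/
def splits {d : ℕ} : List (Fin d) → List (List (Fin d) × List (Fin d))
  | [] => [([], [])]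
  | i :: L => (splits L).map (fun s => (i :: s.1, s.2)) ++ (splits L).map (fun s => (s.1, i :: s.2))

section Families

variable {d : ℕ} {Ω : Set (Euc d)} {q : ℕ}

lemma IsFam.mono {f : Euc d → ℝ} {φ : List (Fin d) → Euc d → ℝ} (h : IsFam Ω q f φ) {p : ℕ}
    (hp : p ≤ q) : IsFam Ω p f φ :=
  ⟨h.eq, fun L hL => h.cont L (hL.trans hp), fun L hL => h.deriv L (hL.trans_le hp)⟩

lemma IsFam.itp_eq (hΩ : IsOpen Ω) {f : Euc d → ℝ} {φ : List (Fin d) → Euc d → ℝ}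
    (h : IsFam Ω q f φ) (L : List (Fin d)) : L.length ≤ q → EqOn (itp L f) (φ L) Ω := by
  induction L with
  | nil => exact fun _ => h.eq.mono subset_closure
  | cons i L ih =>
    intro hL x hx
    simp only [List.length_cons] at hL
    have h1 := pd_congr hΩ (ih (by omega)) i hx
    exact h1.trans (pd_eq_of_hasFDerivAt (h.deriv L (by omega) x hx) i)

lemma IsFam.contDiffOn (hΩ : IsOpen Ω) {f : Euc d → ℝ} {φ : List (Fin d) → Euc d → ℝ}
    (h : IsFam Ω q f φ) : ContDiffOn ℝ (q : ℕ∞) f Ω := by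
  have key : ∀ (m : ℕ) (L : List (Fin d)), L.length + m ≤ q →
      ContDiffOn ℝ (m : ℕ∞) (φ L) Ω := by
    intro m
    induction m with
    | zero =>
      intro L hL
      have := (h.cont L (by omega)).mono (subset_closure (s := Ω))
      simpa using this
    | succ m ih =>
      intro L hL
      have e : (((m + 1 : ℕ) : ℕ∞) : WithTop ℕ∞) = ((m : ℕ∞) : WithTop ℕ∞) + 1 := by norm_cast
      rw [e, contDiffOn_succ_iff_fderiv_of_isOpen hΩ]
      have hd := h.deriv L (by omega)
      refine ⟨fun x hx => (hd x hx).differentiableAt.differentiableWithinAt, ?_, ?_⟩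
      · intro hm
        exact absurd hm (by simp)
      · have h2 : ContDiffOn ℝ (m : ℕ∞) (fun x => gradL fun j => φ (j :: L) x) Ω := by
          unfold gradL
          refine ContDiffOn.sum fun j _ => ?_
          exact (ih (j :: L) (by simp; omega)).smul contDiffOn_const
        exact h2.congr fun x hx => (hd x hx).fderiv
  exact (key q [] (by simp)).congr fun x hx => h.eq (subset_closure hx)

lemma IsFam.memCq (hΩ : IsOpen Ω) {f : Euc d → ℝ} {φ : List (Fin d) → Euc d → ℝ}
    (h : IsFam Ω q f φ) : MemCq Ω q f := by
  refine ⟨h.contDiffOn hΩ, (h.cont [] (by simp)).congr h.eq, fun α hα => ?_⟩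
  have hl : (idxList α).length ≤ q := by rwa [length_idxList]
  refine ⟨φ (idxList α), h.cont _ hl, ?_⟩
  rw [mpd_eq_itp]
  exact (h.itp_eq hΩ _ hl).symm

lemma MemCq.exists_fam (hΩ : IsOpen Ω) {f : Euc d → ℝ} (h : MemCq Ω q f) :
    ∃ φ, IsFam Ω q f φ := by
  obtain ⟨hc, hcl, hg⟩ := h
  have h1 : ∀ L : List (Fin d), ∃ g : Euc d → ℝ, (L = [] → g = f) ∧ (L.length ≤ q →
      ContinuousOn g (closure Ω) ∧ EqOn g (itp L f) Ω) := by
    intro L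
    by_cases h0 : L = []
    · subst h0
      exact ⟨f, fun _ => rfl, fun _ => ⟨hcl, fun _ _ => rfl⟩⟩
    by_cases hL : L.length ≤ q
    · obtain ⟨g, hg1, hg2⟩ := hg (fun i => L.count i) (by rwa [sum_count])
      exact ⟨g, fun h => absurd h h0, fun _ => ⟨hg1, hg2.trans (itp_eq_mpd_count hΩ hc hL).symm⟩⟩
    · exact ⟨0, fun h => absurd h h0, fun h => absurd h hL⟩
  choose φ hφ0 hφ using h1
  refine ⟨φ, fun x _ => by rw [hφ0 [] rfl], fun L hL => (hφ L hL).1, fun L hL x hx => ?_⟩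
  have hd : DifferentiableAt ℝ (itp L f) x :=
    ((itp_contDiffOn hΩ L q 1 (by omega) hc).differentiableOn (by simp)).differentiableAt
      (hΩ.mem_nhds hx)
  have h2 := hasFDerivAt_pd hd
  have h3 : (fun j => pd j (itp L f) x) = fun j => φ (j :: L) x := by
    funext j
    exact ((hφ (j :: L) (by simp; omega)).2 hx).symm
  rw [h3] at h2
  exact h2.congr_of_eventuallyEq ((hφ L hL.le).2.eventuallyEq_of_mem (hΩ.mem_nhds hx))

lemma continuousOn_gradL {E : Type*} [TopologicalSpace E] {s : Set E} {c : Fin d → E → ℝ}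
    (h : ∀ j, ContinuousOn (c j) s) : ContinuousOn (fun p => gradL fun j => c j p) s := by
  unfold gradL
  exact continuousOn_finsetSum _ fun j _ => (h j).smul continuousOn_const

/-- The differentiation rule passes from parameters in `Ω` to parameters on the boundary
because the derivatives converge locally uniformly. -/
lemma exists_kfam (hΩ : IsOpen Ω) {κ : Euc d → Euc d → ℝ}
    (hc : ∀ x ∈ Ω, ContDiffOn ℝ (q : ℕ∞) (κ x) Ω)
    (hcl : ContinuousOn (fun p : Euc d × Euc d => κ p.1 p.2) (closure Ω ×ˢ closure Ω))
    (hg : ∀ β : Fin d → ℕ, (∑ i, β i) ≤ q → ∃ g : Euc d → Euc d → ℝ,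
      ContinuousOn (fun p : Euc d × Euc d => g p.1 p.2) (closure Ω ×ˢ closure Ω) ∧
      ∀ x ∈ Ω, ∀ y ∈ Ω, g x y = mpd β (κ x) y) :
    ∃ Γ, IsKFam Ω q κ Γ := by
  have h1 : ∀ L : List (Fin d), ∃ g : Euc d → Euc d → ℝ, (L = [] → g = κ) ∧ (L.length ≤ q →
      ContinuousOn (fun p : Euc d × Euc d => g p.1 p.2) (closure Ω ×ˢ closure Ω) ∧
      ∀ x ∈ Ω, EqOn (g x) (itp L (κ x)) Ω) := by
    intro L
    by_cases h0 : L = []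
    · subst h0
      exact ⟨κ, fun _ => rfl, fun _ => ⟨hcl, fun _ _ _ _ => rfl⟩⟩
    by_cases hL : L.length ≤ q
    · obtain ⟨g, hg1, hg2⟩ := hg (fun i => L.count i) (by rwa [sum_count])
      refine ⟨g, fun h => absurd h h0, fun _ => ⟨hg1, fun x hx y hy => ?_⟩⟩
      rw [hg2 x hx y hy, itp_eq_mpd_count hΩ (hc x hx) hL hy]
    · exact ⟨0, fun h => absurd h h0, fun h => absurd h hL⟩
  choose Γ hΓ0 hΓ using h1
  have hin : ∀ L, L.length < q → ∀ x ∈ Ω, ∀ y ∈ Ω,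
      HasFDerivAt (Γ L x) (gradL fun j => Γ (j :: L) x y) y := by
    intro L hL x hx y hy
    have hd : DifferentiableAt ℝ (itp L (κ x)) y :=
      ((itp_contDiffOn hΩ L q 1 (by omega) (hc x hx)).differentiableOn
        (by simp)).differentiableAt (hΩ.mem_nhds hy)
    have h2 := hasFDerivAt_pd hd
    have h3 : (fun j => pd j (itp L (κ x)) y) = fun j => Γ (j :: L) x y := by
      funext j
      exact ((hΓ (j :: L) (by simp; omega)).2 x hx hy).symm
    rw [h3] at h2
    exact h2.congr_of_eventuallyEq
      (((hΓ L hL.le).2 x hx).eventuallyEq_of_mem (hΩ.mem_nhds hy))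
  refine ⟨Γ, hΓ0 [] rfl, fun L hL => (hΓ L hL).1, fun L hL x hx y hy => ?_⟩
  have : (𝓝[Ω] x).NeBot := mem_closure_iff_nhdsWithin_neBot.1 hx
  have hG := continuousOn_gradL (s := closure Ω ×ˢ closure Ω)
    (c := fun j (p : Euc d × Euc d) => Γ (j :: L) p.1 p.2)
    fun j => (hΓ (j :: L) (by simp; omega)).1
  have hyc := subset_closure hy
  have hyn : ∀ᶠ z in 𝓝 y, z ∈ Ω := hΩ.mem_nhds hy
  refine hasFDerivAt_of_tendstoUniformlyOnFilter (l := 𝓝[Ω] x) (f := fun x' => Γ L x')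
    (f' := fun x' y' => gradL fun j => Γ (j :: L) x' y')
    (g' := fun y' => gradL fun j => Γ (j :: L) x y') ?_ ?_ ?_
  · rw [Metric.tendstoUniformlyOnFilter_iff]
    have hprod : ∀ᶠ n : Euc d × Euc d in 𝓝[Ω] x ×ˢ 𝓝 y, n.1 ∈ Ω ∧ n.2 ∈ Ω :=
      eventually_mem_nhdsWithin.prod_mk hyn
    have hf1 : Tendsto (fun n : Euc d × Euc d => n.1) (𝓝[Ω] x ×ˢ 𝓝 y) (𝓝 x) :=
      tendsto_fst.mono_right nhdsWithin_le_nhds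
    have hf2 : Tendsto (fun n : Euc d × Euc d => n.2) (𝓝[Ω] x ×ˢ 𝓝 y) (𝓝 y) := tendsto_snd
    have hw := hG (x, y) ⟨hx, hyc⟩
    have t1 : Tendsto (fun n : Euc d × Euc d => gradL fun j => Γ (j :: L) n.1 n.2)
        (𝓝[Ω] x ×ˢ 𝓝 y) (𝓝 (gradL fun j => Γ (j :: L) x y)) := by
      refine hw.tendsto.comp (tendsto_nhdsWithin_iff.2 ⟨hf1.prodMk_nhds hf2, ?_⟩)
      filter_upwards [hprod] with n hn
      exact ⟨subset_closure hn.1, subset_closure hn.2⟩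
    have t2 : Tendsto (fun n : Euc d × Euc d => gradL fun j => Γ (j :: L) x n.2)
        (𝓝[Ω] x ×ˢ 𝓝 y) (𝓝 (gradL fun j => Γ (j :: L) x y)) := by
      refine (hw.tendsto.comp (f := fun n : Euc d × Euc d => (x, n.2))
        (tendsto_nhdsWithin_iff.2 ⟨tendsto_const_nhds.prodMk_nhds hf2, ?_⟩))
      filter_upwards [hprod] with n hn
      exact ⟨hx, subset_closure hn.2⟩
    intro ε hε
    have t3 := t2.dist t1
    rw [dist_self] at t3
    exact t3.eventually_lt_const hε
  · filter_upwards [eventually_mem_nhdsWithin.prod_mk hyn] with n hn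
    exact hin L hL n.1 hn.1 n.2 hn.2
  · filter_upwards [hyn] with z hz
    have hw := (hΓ L hL.le).1 (x, z) ⟨hx, subset_closure hz⟩
    refine hw.tendsto.comp (f := fun n : Euc d => (n, z)) (tendsto_nhdsWithin_iff.2
      ⟨(tendsto_id.mono_left nhdsWithin_le_nhds).prodMk_nhds tendsto_const_nhds, ?_⟩)
    filter_upwards [eventually_mem_nhdsWithin] with n hn
    exact ⟨subset_closure hn, subset_closure hz⟩

lemma IsKFam.fam {κ : Euc d → Euc d → ℝ} {Γ : List (Fin d) → Euc d → Euc d → ℝ}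
    (h : IsKFam Ω q κ Γ) {x : Euc d} (hx : x ∈ closure Ω) :
    IsFam Ω q (κ x) (fun L => Γ L x) := by
  refine ⟨fun y _ => by rw [h.eq], fun L hL => ?_, fun L hL y hy => h.deriv L hL x hx y hy⟩
  exact (h.cont L hL).comp (f := fun y : Euc d => (x, y)) (by fun_prop) fun y hy => ⟨hx, hy⟩

lemma IsFam.congr {f g : Euc d → ℝ} {φ : List (Fin d) → Euc d → ℝ} (h : IsFam Ω q f φ)
    (hg : EqOn g f (closure Ω)) : IsFam Ω q g φ :=
  ⟨hg.trans h.eq, h.cont, h.deriv⟩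

lemma IsFam.add {f g : Euc d → ℝ} {φ ψ : List (Fin d) → Euc d → ℝ} (hf : IsFam Ω q f φ)
    (hg : IsFam Ω q g ψ) : IsFam Ω q (fun x => f x + g x) (fun L x => φ L x + ψ L x) := by
  refine ⟨fun x hx => ?_, fun L hL => (hf.cont L hL).add (hg.cont L hL), fun L hL x hx => ?_⟩
  · simp only [hf.eq hx, hg.eq hx]
  · refine ((hf.deriv L hL x hx).add (hg.deriv L hL x hx)).congr_fderiv ?_
    ext v
    simp [gradL_apply, add_mul, Finset.sum_add_distrib]

lemma IsFam.const_mul {f : Euc d → ℝ} {φ : List (Fin d) → Euc d → ℝ} (hf : IsFam Ω q f φ)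
    (c : ℝ) : IsFam Ω q (fun x => c * f x) (fun L x => c * φ L x) := by
  refine ⟨fun x hx => ?_, fun L hL => continuousOn_const.mul (hf.cont L hL), fun L hL x hx => ?_⟩
  · simp only [hf.eq hx]
  · refine ((hf.deriv L hL x hx).const_mul c).congr_fderiv ?_
    ext v
    simp [gradL_apply, Finset.mul_sum, mul_assoc]

lemma isFam_zero : IsFam Ω q (fun _ : Euc d => 0) (fun _ _ => 0) := by
  refine ⟨fun _ _ => rfl, fun _ _ => continuousOn_const, fun L _ x _ => ?_⟩
  refine (hasFDerivAt_const (0 : ℝ) x).congr_fderiv ?_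
  ext v
  simp [gradL_apply]

lemma isFam_one : IsFam Ω q (fun _ : Euc d => 1) (fun L _ => if L = [] then 1 else 0) := by
  refine ⟨fun _ _ => by simp, fun _ _ => continuousOn_const, fun L _ x _ => ?_⟩
  refine (hasFDerivAt_const _ x).congr_fderiv ?_
  ext v
  simp [gradL_apply]

lemma isFam_sum {ι : Type*} (s : Finset ι) {f : ι → Euc d → ℝ}
    {φ : ι → List (Fin d) → Euc d → ℝ} (h : ∀ i, IsFam Ω q (f i) (φ i)) :
    IsFam Ω q (fun x => ∑ i ∈ s, f i x) (fun L x => ∑ i ∈ s, φ i L x) := by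
  classical
  induction s using Finset.induction_on with
  | empty => simpa using isFam_zero
  | insert a s ha ih =>
    simp only [Finset.sum_insert ha]
    exact (h a).add ih

lemma splits_length (L : List (Fin d)) : (splits L).length = 2 ^ L.length := by
  induction L with
  | nil => rfl
  | cons i L ih => simp [splits, ih, pow_succ]; ring

lemma splits_mem_length (L : List (Fin d)) :
    ∀ s ∈ splits L, s.1.length ≤ L.length ∧ s.2.length ≤ L.length := by
  induction L with
  | nil => simp [splits]
  | cons i L ih =>
    intro s hs
    simp only [splits, List.mem_append, List.mem_map] at hs
    rcases hs with ⟨t, ht, rfl⟩ | ⟨t, ht, rfl⟩ <;>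
    · have := ih t ht
      simp only [List.length_cons]
      omega

lemma hasFDerivAt_list_sum {ι : Type*} (l : List ι) (a : ι → Euc d → ℝ) (c : ι → Fin d → ℝ)
    (x : Euc d) (h : ∀ s ∈ l, HasFDerivAt (a s) (gradL (c s)) x) :
    HasFDerivAt (fun y => (l.map fun s => a s y).sum)
      (gradL fun j => (l.map fun s => c s j).sum) x := by
  induction l with
  | nil =>
    refine (hasFDerivAt_const (0 : ℝ) x).congr_fderiv ?_
    ext v
    simp [gradL_apply]
  | cons s l ih =>
    simp only [List.map_cons, List.sum_cons]
    refine ((h s (by simp)).add (ih fun t ht => h t (by simp [ht]))).congr_fderiv ?_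
    ext v
    simp [gradL_apply, add_mul, Finset.sum_add_distrib]

/-- Leibniz rule. -/
lemma IsFam.mul {f g : Euc d → ℝ} {φ ψ : List (Fin d) → Euc d → ℝ} (hf : IsFam Ω q f φ)
    (hg : IsFam Ω q g ψ) : IsFam Ω q (fun x => f x * g x)
      (fun L x => ((splits L).map fun s => φ s.1 x * ψ s.2 x).sum) := by
  refine ⟨fun x hx => ?_, fun L hL => ?_, fun L hL x hx => ?_⟩
  · simp [splits, hf.eq hx, hg.eq hx]
  · refine continuousOn_list_sum (l := splits L)
      (f := fun (s : List (Fin d) × List (Fin d)) x => φ s.1 x * ψ s.2 x) fun s hs => ?_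
    have := splits_mem_length L s hs
    exact (hf.cont _ (by omega)).mul (hg.cont _ (by omega))
  · refine (hasFDerivAt_list_sum (splits L) (fun s x => φ s.1 x * ψ s.2 x)
      (fun s j => φ (j :: s.1) x * ψ s.2 x + φ s.1 x * ψ (j :: s.2) x) x fun s hs => ?_).congr_fderiv
      ?_
    · have := splits_mem_length L s hs
      refine ((hf.deriv s.1 (by omega) x hx).mul (hg.deriv s.2 (by omega) x hx)).congr_fderiv ?_
      ext v
      simp only [gradL_apply, add_mul, Finset.sum_add_distrib, Finset.mul_sum,
        add_apply, smul_apply, smul_eq_mul]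
      rw [add_comm]
      congr 1
      · exact Finset.sum_congr rfl fun j _ => by ring
      · exact Finset.sum_congr rfl fun j _ => by ring
    · congr 1
      funext j
      simp only [splits, List.map_append, List.map_map, List.sum_append]
      rw [List.sum_map_add]
      rfl

lemma abs_list_sum_le {ι : Type*} (l : List ι) (a : ι → ℝ) (B : ℝ) (h : ∀ s ∈ l, |a s| ≤ B) :
    |(l.map a).sum| ≤ l.length * B := by
  induction l with
  | nil => simp
  | cons s l ih =>
    simp only [List.map_cons, List.sum_cons, List.length_cons]
    have h1 := h s (by simp)
    have h2 := ih fun t ht => h t (by simp [ht])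
    have h3 := abs_add_le (a s) (l.map a).sum
    push_cast
    linarith

end Families

/-! ### The `C^q` norm and the integral operator -/

section Norms

variable {d : ℕ} {Ω : Set (Euc d)} {q : ℕ}

lemma cqNorm_term_nonneg (f : Euc d → ℝ) (α : Fin d → Fin (q + 1)) :
    0 ≤ if (∑ i, (α i : ℕ)) ≤ q then
      (∏ i, (Nat.factorial (α i) : ℝ))⁻¹ *
        sSup ((fun x => |mpd (fun i => (α i : ℕ)) f x|) '' Ω)
    else 0 := by
  split_ifs
  · refine mul_nonneg (inv_nonneg.2 (Finset.prod_nonneg fun _ _ => by positivity))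
      (Real.sSup_nonneg ?_)
    rintro _ ⟨x, _, rfl⟩
    exact abs_nonneg _
  · exact le_rfl

lemma cqNorm_nonneg (f : Euc d → ℝ) : 0 ≤ CqNorm Ω q f :=
  Finset.sum_nonneg fun α _ => cqNorm_term_nonneg f α

lemma cqNorm_le (hΩ : IsOpen Ω) {f : Euc d → ℝ} {φ : List (Fin d) → Euc d → ℝ}
    (h : IsFam Ω q f φ) {B : ℝ} (hB0 : 0 ≤ B)
    (hB : ∀ L, L.length ≤ q → ∀ x ∈ Ω, |φ L x| ≤ B) :
    CqNorm Ω q f ≤ (Fintype.card (Fin d → Fin (q + 1)) : ℝ) * B := by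
  unfold CqNorm
  rw [← nsmul_eq_mul, ← Finset.card_univ]
  refine Finset.sum_le_card_nsmul _ _ _ fun α _ => ?_
  split_ifs with hα
  · have h1 : sSup ((fun x => |mpd (fun i => (α i : ℕ)) f x|) '' Ω) ≤ B := by
      refine Real.sSup_le ?_ hB0
      rintro _ ⟨x, hx, rfl⟩
      have hl : (idxList fun i => (α i : ℕ)).length ≤ q := by rwa [length_idxList]
      simp only [mpd_eq_itp]
      rw [h.itp_eq hΩ _ hl hx]
      exact hB _ hl x hx
    have h2 : (∏ i, (Nat.factorial (α i) : ℝ))⁻¹ ≤ 1 := by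
      refine inv_le_one_of_one_le₀ ?_
      exact_mod_cast Nat.one_le_iff_ne_zero.2
        (Finset.prod_ne_zero_iff.2 fun i _ => Nat.factorial_ne_zero _)
    have h3 : 0 ≤ (∏ i, (Nat.factorial (α i) : ℝ))⁻¹ :=
      inv_nonneg.2 (Finset.prod_nonneg fun _ _ => by positivity)
    calc _ ≤ (∏ i, (Nat.factorial (α i) : ℝ))⁻¹ * B := mul_le_mul_of_nonneg_left h1 h3
      _ ≤ 1 * B := mul_le_mul_of_nonneg_right h2 hB0
      _ = B := one_mul B
  · exact hB0

lemma abs_le_cqNorm (hΩ : IsOpen Ω) (hΩb : Bornology.IsBounded Ω) {f : Euc d → ℝ}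
    {φ : List (Fin d) → Euc d → ℝ} (h : IsFam Ω q f φ) {L : List (Fin d)} (hL : L.length ≤ q)
    {x : Euc d} (hx : x ∈ Ω) :
    |φ L x| ≤ ((Nat.factorial q : ℝ) ^ d) * CqNorm Ω q f := by
  have hcount : ∀ i, L.count i ≤ q := fun i => List.count_le_length.trans hL
  set α : Fin d → Fin (q + 1) := fun i => ⟨L.count i, Nat.lt_succ_of_le (hcount i)⟩ with hα
  have hsum : (∑ i, (α i : ℕ)) ≤ q := by simpa [hα, sum_count] using hL
  have heq : EqOn (mpd (fun i => (α i : ℕ)) f) (φ L) Ω :=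
    (itp_eq_mpd_count hΩ (h.contDiffOn hΩ) hL).symm.trans (h.itp_eq hΩ L hL)
  obtain ⟨M, hM⟩ := hΩb.isCompact_closure.exists_bound_of_continuousOn (h.cont L hL)
  have hbdd : BddAbove ((fun x => |mpd (fun i => (α i : ℕ)) f x|) '' Ω) := by
    refine ⟨M, ?_⟩
    rintro _ ⟨z, hz, rfl⟩
    simp only [heq hz]
    exact hM z (subset_closure hz)
  have h1 : |φ L x| ≤ sSup ((fun x => |mpd (fun i => (α i : ℕ)) f x|) '' Ω) := by
    rw [← heq hx]
    exact le_csSup hbdd ⟨x, hx, rfl⟩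
  have h2 : (∏ i, (Nat.factorial (α i) : ℝ))⁻¹ *
      sSup ((fun x => |mpd (fun i => (α i : ℕ)) f x|) '' Ω) ≤ CqNorm Ω q f := by
    have := Finset.single_le_sum (f := fun α : Fin d → Fin (q + 1) =>
      if (∑ i, (α i : ℕ)) ≤ q then
      (∏ i, (Nat.factorial (α i) : ℝ))⁻¹ *
        sSup ((fun x => |mpd (fun i => (α i : ℕ)) f x|) '' Ω)
      else 0) (fun β _ => cqNorm_term_nonneg f β) (Finset.mem_univ α)
    simp only [if_pos hsum] at this
    exact this
  have hP : 0 < ∏ i, (Nat.factorial (α i) : ℝ) :=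
    Finset.prod_pos fun i _ => by exact_mod_cast Nat.factorial_pos _
  rw [inv_mul_le_iff₀ hP] at h2
  have h3 : ∏ i, (Nat.factorial (α i) : ℝ) ≤ (Nat.factorial q : ℝ) ^ d := by
    have := Finset.prod_le_prod (s := Finset.univ) (f := fun i => (Nat.factorial (α i) : ℝ))
      (g := fun _ => (Nat.factorial q : ℝ)) (fun _ _ => by positivity)
      (fun i _ => by exact_mod_cast Nat.factorial_le (hcount i))
    simpa using this
  exact h1.trans (h2.trans (mul_le_mul_of_nonneg_right h3 (cqNorm_nonneg f)))

lemma exists_cqNorm_mono (hΩ : IsOpen Ω) (hΩb : Bornology.IsBounded Ω) {p : ℕ} (hp : p ≤ q) :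
    ∃ c : ℝ, 0 ≤ c ∧ ∀ (f : Euc d → ℝ) (φ : List (Fin d) → Euc d → ℝ), IsFam Ω q f φ →
      CqNorm Ω p f ≤ c * CqNorm Ω q f := by
  refine ⟨(Fintype.card (Fin d → Fin (p + 1)) : ℝ) * (Nat.factorial q : ℝ) ^ d, by positivity,
    fun f φ h => ?_⟩
  rw [mul_assoc]
  exact cqNorm_le hΩ (h.mono hp) (mul_nonneg (by positivity) (cqNorm_nonneg f))
    fun L hL x hx => abs_le_cqNorm hΩ hΩb h (hL.trans hp) hx

lemma exists_cqNorm_mul (hΩ : IsOpen Ω) (hΩb : Bornology.IsBounded Ω) {p : ℕ} (hp : p ≤ q) :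
    ∃ c : ℝ, 0 ≤ c ∧ ∀ (f g : Euc d → ℝ) (φ ψ : List (Fin d) → Euc d → ℝ), IsFam Ω q f φ →
      IsFam Ω q g ψ → CqNorm Ω p (fun x => f x * g x) ≤ c * (CqNorm Ω q f * CqNorm Ω q g) := by
  refine ⟨(Fintype.card (Fin d → Fin (p + 1)) : ℝ) * (2 ^ p * ((Nat.factorial q : ℝ) ^ d) ^ 2),
    by positivity, fun f g φ ψ hf hg => ?_⟩
  have hnf := cqNorm_nonneg (Ω := Ω) (q := q) f
  have hng := cqNorm_nonneg (Ω := Ω) (q := q) g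
  rw [mul_assoc]
  refine cqNorm_le hΩ ((hf.mul hg).mono hp) (by positivity) fun L hL x hx => ?_
  refine (abs_list_sum_le (splits L) (fun s => φ s.1 x * ψ s.2 x)
    (((Nat.factorial q : ℝ) ^ d) ^ 2 * (CqNorm Ω q f * CqNorm Ω q g)) fun s hs => ?_).trans ?_
  · have := splits_mem_length L s hs
    have h1 := abs_le_cqNorm hΩ hΩb hf (L := s.1) (by omega) hx
    have h2 := abs_le_cqNorm hΩ hΩb hg (L := s.2) (by omega) hx
    rw [abs_mul]
    calc |φ s.1 x| * |ψ s.2 x| ≤ (((Nat.factorial q : ℝ) ^ d) * CqNorm Ω q f) *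
          (((Nat.factorial q : ℝ) ^ d) * CqNorm Ω q g) :=
          mul_le_mul h1 h2 (abs_nonneg _) (by positivity)
      _ = _ := by ring
  · rw [splits_length, ← mul_assoc]
    push_cast
    have : (2 : ℝ) ^ L.length ≤ 2 ^ p := pow_le_pow_right₀ (by norm_num) hL
    gcongr

end Norms

section Integral

variable {d : ℕ} {Ω : Set (Euc d)} {q : ℕ}

lemma finite_restrict (hΩb : Bornology.IsBounded Ω) :
    IsFiniteMeasure (volume.restrict Ω : Measure (Euc d)) :=
  ⟨by rw [Measure.restrict_apply_univ]; exact hΩb.measure_lt_top⟩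

lemma slice_mul_continuousOn {G : Euc d → Euc d → ℝ}
    (hG : ContinuousOn (fun p : Euc d × Euc d => G p.1 p.2) (closure Ω ×ˢ closure Ω))
    {u : Euc d → ℝ} (hu : ContinuousOn u (closure Ω)) {x : Euc d} (hx : x ∈ closure Ω) :
    ContinuousOn (fun y => G x y * u y) (closure Ω) :=
  (hG.comp (f := fun y : Euc d => (x, y)) (by fun_prop) fun y hy => ⟨hx, hy⟩).mul hu

lemma exists_bound_mul (hΩb : Bornology.IsBounded Ω) {G : Euc d → Euc d → ℝ}
    (hG : ContinuousOn (fun p : Euc d × Euc d => G p.1 p.2) (closure Ω ×ˢ closure Ω))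
    {u : Euc d → ℝ} (hu : ContinuousOn u (closure Ω)) :
    ∃ M : ℝ, ∀ x ∈ closure Ω, ∀ y ∈ closure Ω, |G x y * u y| ≤ M := by
  have hc : ContinuousOn (fun p : Euc d × Euc d => G p.1 p.2 * u p.2)
      (closure Ω ×ˢ closure Ω) :=
    hG.mul (hu.comp continuousOn_snd fun p hp => hp.2)
  obtain ⟨M, hM⟩ := (hΩb.isCompact_closure.prod hΩb.isCompact_closure).exists_bound_of_continuousOn
    hc
  exact ⟨M, fun x hx y hy => hM (x, y) ⟨hx, hy⟩⟩

lemma integrableOn_of_continuousOn_closure (hΩb : Bornology.IsBounded Ω) {v : Euc d → ℝ}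
    (hv : ContinuousOn v (closure Ω)) : IntegrableOn v Ω :=
  (hv.integrableOn_compact hΩb.isCompact_closure).mono_set subset_closure

lemma continuousOn_integral (hΩ : IsOpen Ω) (hΩb : Bornology.IsBounded Ω) {G : Euc d → Euc d → ℝ}
    (hG : ContinuousOn (fun p : Euc d × Euc d => G p.1 p.2) (closure Ω ×ˢ closure Ω))
    {u : Euc d → ℝ} (hu : ContinuousOn u (closure Ω)) :
    ContinuousOn (fun x => ∫ y in Ω, G x y * u y) (closure Ω) := by
  have := finite_restrict hΩb
  obtain ⟨M, hM⟩ := exists_bound_mul hΩb hG hu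
  refine continuousOn_of_dominated (bound := fun _ => M) (fun x hx => ?_) (fun x hx => ?_)
    (integrable_const M) ?_
  · exact (integrableOn_of_continuousOn_closure hΩb
      (slice_mul_continuousOn hG hu hx)).aestronglyMeasurable
  · exact (ae_restrict_iff' hΩ.measurableSet).2 (Eventually.of_forall fun y hy =>
      hM x hx y (subset_closure hy))
  · refine (ae_restrict_iff' hΩ.measurableSet).2 (Eventually.of_forall fun y hy => ?_)
    exact (hG.comp (f := fun x : Euc d => (x, y)) (by fun_prop)
      fun x hx => ⟨hx, subset_closure hy⟩).mul continuousOn_const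

lemma IsKFam.integral (hΩ : IsOpen Ω) (hΩb : Bornology.IsBounded Ω) {κ : Euc d → Euc d → ℝ}
    {Γ : List (Fin d) → Euc d → Euc d → ℝ} (h : IsKFam Ω q κ Γ) {u : Euc d → ℝ}
    (hu : ContinuousOn u (closure Ω)) :
    IsFam Ω q (fun x => ∫ y in Ω, κ y x * u y) (fun L x => ∫ y in Ω, Γ L y x * u y) := by
  have hfin := finite_restrict hΩb
  have hsw : ∀ L : List (Fin d), L.length ≤ q →
      ContinuousOn (fun p : Euc d × Euc d => Γ L p.2 p.1) (closure Ω ×ˢ closure Ω) :=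
    fun L hL => (h.cont L hL).comp (f := fun p : Euc d × Euc d => (p.2, p.1)) (by fun_prop)
      fun p hp => ⟨hp.2, hp.1⟩
  refine ⟨fun x _ => by rw [h.eq], fun L hL =>
    continuousOn_integral hΩ hΩb (G := fun x y => Γ L y x) (hsw L hL) hu, fun L hL x hx => ?_⟩
  have hlen : ∀ j : Fin d, (j :: L).length ≤ q := fun j => by simp; omega
  have hM : ∀ j : Fin d, ∃ M : ℝ, ∀ x ∈ closure Ω, ∀ y ∈ closure Ω, |Γ (j :: L) y x * u y| ≤ M :=
    fun j => exists_bound_mul hΩb (G := fun x y => Γ (j :: L) y x) (hsw _ (hlen j)) hu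
  choose M hM using hM
  have hcont : ∀ x ∈ closure Ω, ∀ L : List (Fin d), L.length ≤ q →
      ContinuousOn (fun y => Γ L y x * u y) (closure Ω) := fun x hx L hL =>
    slice_mul_continuousOn (G := fun x y => Γ L y x) (hsw L hL) hu hx
  have hint : ∀ j, IntegrableOn (fun y => Γ (j :: L) y x * u y) Ω := fun j =>
    integrableOn_of_continuousOn_closure hΩb (hcont x (subset_closure hx) _ (hlen j))
  have key := hasFDerivAt_integral_of_dominated_of_fderiv_le (𝕜 := ℝ) (μ := volume.restrict Ω)
    (F := fun x y => Γ L y x * u y) (s := Ω) (x₀ := x) (bound := fun _ => ∑ j, M j)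
    (F' := fun x y => gradL fun j => Γ (j :: L) y x * u y) (hΩ.mem_nhds hx) ?_ ?_ ?_ ?_ ?_ ?_
  · refine key.congr_fderiv ?_
    unfold gradL
    rw [integral_finsetSum]
    · exact Finset.sum_congr rfl fun j _ => integral_smul_const _ _
    · exact fun j _ => (hint j).smul_const _
  · filter_upwards [hΩ.mem_nhds hx] with z hz
    exact (integrableOn_of_continuousOn_closure hΩb
      (hcont z (subset_closure hz) L hL.le)).aestronglyMeasurable
  · exact integrableOn_of_continuousOn_closure hΩb (hcont x (subset_closure hx) L hL.le)
  · exact ((continuousOn_gradL fun j => hcont x (subset_closure hx) _ (hlen j)).mono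
      subset_closure).aestronglyMeasurable hΩ.measurableSet
  · refine (ae_restrict_iff' hΩ.measurableSet).2 (Eventually.of_forall fun y hy z hz => ?_)
    exact (norm_gradL_le _).trans (Finset.sum_le_sum fun j _ =>
      hM j z (subset_closure hz) y (subset_closure hy))
  · exact integrable_const _
  · refine (ae_restrict_iff' hΩ.measurableSet).2 (Eventually.of_forall fun y hy z hz => ?_)
    refine ((h.deriv L hL y (subset_closure hy) z hz).mul_const (u y)).congr_fderiv ?_
    ext v
    simp only [gradL_apply, smul_apply, smul_eq_mul, Finset.mul_sum]
    exact Finset.sum_congr rfl fun j _ => by ring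

/-- Bounded inverse theorem for `lam - K` on the Banach space of continuous functions on the
compact set `closure Ω`. -/
lemma exists_inv_bound (hΩ : IsOpen Ω) (hΩb : Bornology.IsBounded Ω) {k : Euc d → Euc d → ℝ}
    (hk : ContinuousOn (fun p : Euc d × Euc d => k p.1 p.2) (closure Ω ×ˢ closure Ω)) (lam : ℝ)
    (hspec : ∀ g : Euc d → ℝ, ContinuousOn g (closure Ω) →
      (∃ u : Euc d → ℝ, ContinuousOn u (closure Ω) ∧
        ∀ x ∈ closure Ω, lam * u x - ∫ y in Ω, k x y * u y = g x) ∧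
      (∀ u₁ u₂ : Euc d → ℝ,
        (ContinuousOn u₁ (closure Ω) ∧
          ∀ x ∈ closure Ω, lam * u₁ x - ∫ y in Ω, k x y * u₁ y = g x) →
        (ContinuousOn u₂ (closure Ω) ∧
          ∀ x ∈ closure Ω, lam * u₂ x - ∫ y in Ω, k x y * u₂ y = g x) →
        Set.EqOn u₁ u₂ (closure Ω))) :
    ∃ C > (0 : ℝ), ∀ s : Euc d → ℝ, ContinuousOn s (closure Ω) → ∀ B : ℝ, 0 ≤ B →
      (∀ x ∈ closure Ω, |lam * s x - ∫ y in Ω, k x y * s y| ≤ B) →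
      ∀ x ∈ closure Ω, |s x| ≤ C * B := by
  classical
  have : CompactSpace (closure Ω) := isCompact_iff_compactSpace.1 hΩb.isCompact_closure
  have hfin := finite_restrict hΩb
  -- extension by zero; only its values on `closure Ω` matter
  let ex : C(closure Ω, ℝ) → Euc d → ℝ := fun v x => if h : x ∈ closure Ω then v ⟨x, h⟩ else 0
  have hex : ∀ (v : C(closure Ω, ℝ)) (x : closure Ω), ex v x = v x := fun v x => by
    simp [ex]
  have hexc : ∀ v, ContinuousOn (ex v) (closure Ω) := fun v => by
    rw [continuousOn_iff_continuous_domRestrict]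
    convert v.continuous using 1
    funext x
    exact hex v x
  have hKc : ∀ u, ContinuousOn u (closure Ω) →
      ContinuousOn (fun x => lam * u x - ∫ y in Ω, k x y * u y) (closure Ω) := fun u hu =>
    (continuousOn_const.mul hu).sub (continuousOn_integral hΩ hΩb hk hu)
  have hint : ∀ (v : C(closure Ω, ℝ)) (x : closure Ω),
      IntegrableOn (fun y => k x y * ex v y) Ω := fun v x =>
    integrableOn_of_continuousOn_closure hΩb (slice_mul_continuousOn hk (hexc v) x.2)
  let T0 : C(closure Ω, ℝ) →ₗ[ℝ] C(closure Ω, ℝ) :=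
    { toFun := fun v => ⟨_, (hKc (ex v) (hexc v)).domRestrict⟩
      map_add' := by
        intro v w
        ext x
        have e : ∀ y, ex (v + w) y = ex v y + ex w y := fun y => by
          by_cases hy : y ∈ closure Ω <;> simp [ex, hy]
        simp only [ContinuousMap.coe_mk, domRestrict_apply, ContinuousMap.add_apply, e, mul_add]
        rw [integral_add (hint v x) (hint w x)]
        ring
      map_smul' := by
        intro c v
        ext x
        have e : ∀ y, ex (c • v) y = c * ex v y := fun y => by
          by_cases hy : y ∈ closure Ω <;> simp [ex, hy]
        have e2 : ∀ y, k x y * (c * ex v y) = c * (k x y * ex v y) := fun y => by ring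
        simp only [ContinuousMap.coe_mk, domRestrict_apply, ContinuousMap.smul_apply, e, e2,
          RingHom.id_apply, smul_eq_mul]
        rw [integral_const_mul]
        ring }
  have hT0 : ∀ v (x : closure Ω), T0 v x = lam * ex v x - ∫ y in Ω, k x y * ex v y :=
    fun v x => rfl
  obtain ⟨M, hM⟩ := (hΩb.isCompact_closure.prod hΩb.isCompact_closure).exists_bound_of_continuousOn
    hk
  have hbound : ∀ v, ‖T0 v‖ ≤ (|lam| + max M 0 * volume.real Ω) * ‖v‖ := by
    intro v
    refine (ContinuousMap.norm_le _ (by positivity)).2 fun x => ?_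
    rw [hT0, hex, add_mul]
    refine (norm_sub_le _ _).trans (add_le_add ?_ ?_)
    · rw [norm_mul, Real.norm_eq_abs]
      exact mul_le_mul_of_nonneg_left (v.norm_coe_le_norm x) (abs_nonneg _)
    · rw [mul_right_comm]
      refine norm_setIntegral_le_of_norm_le_const hΩb.measure_lt_top fun y hy => ?_
      have hyc := subset_closure hy
      rw [norm_mul]
      refine mul_le_mul ((hM (x, y) ⟨x.2, hyc⟩).trans (le_max_left _ _)) ?_ (norm_nonneg _)
        (le_max_right _ _)
      have := hex v ⟨y, hyc⟩
      simp only at this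
      rw [this]
      exact v.norm_coe_le_norm _
  let T : C(closure Ω, ℝ) →L[ℝ] C(closure Ω, ℝ) := T0.mkContinuous _ hbound
  have hT : ∀ v (x : closure Ω), T v x = lam * ex v x - ∫ y in Ω, k x y * ex v y :=
    fun v x => rfl
  have hcomp : ∀ u (hu : ContinuousOn u (closure Ω)) (x : closure Ω),
      T ⟨_, hu.domRestrict⟩ x = lam * u x - ∫ y in Ω, k x y * u y := by
    intro u hu x
    have e : ∀ y ∈ closure Ω, ex ⟨_, hu.domRestrict⟩ y = u y := fun y hy => by
      simp [ex, hy]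
    rw [hT, e x x.2, setIntegral_congr_fun hΩ.measurableSet
      (fun y hy => by rw [e y (subset_closure hy)])]
  have hsurj : Function.Surjective T := by
    intro g
    obtain ⟨u, hu, hug⟩ := (hspec (ex g) (hexc g)).1
    refine ⟨⟨_, hu.domRestrict⟩, ?_⟩
    ext x
    rw [hcomp u hu x, hug x x.2, hex]
  obtain ⟨C, hC, hpre⟩ := T.exists_preimage_norm_le hsurj
  refine ⟨C, hC, fun s hs B hB hsB x hx => ?_⟩
  set S : C(closure Ω, ℝ) := ⟨_, hs.domRestrict⟩ with hS
  obtain ⟨v, hv, hvn⟩ := hpre (T S)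
  have hTS : ‖T S‖ ≤ B := (ContinuousMap.norm_le _ hB).2 fun z => by
    rw [hcomp s hs z]
    exact hsB z z.2
  have hTv : ∀ z ∈ closure Ω, lam * ex v z - ∫ y in Ω, k z y * ex v y =
      lam * s z - ∫ y in Ω, k z y * s y := by
    intro z hz
    rw [← hcomp s hs ⟨z, hz⟩, ← hT v ⟨z, hz⟩, hv]
  have heq := (hspec _ (hKc s hs)).2 (ex v) s ⟨hexc v, hTv⟩ ⟨hs, fun _ _ => rfl⟩ hx
  rw [← heq]
  have h1 := hex v ⟨x, hx⟩
  simp only at h1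
  rw [h1]
  exact (v.norm_coe_le_norm _).trans (hvn.trans (mul_le_mul_of_nonneg_left hTS hC.le))

end Integral

/-! ### Consistency and stability of the discretisation -/

/-- The discretised integral operator applied to a vector `v` of values at the nodes `X`:
reconstruct at the quadrature nodes with `R`, then apply the quadrature rule. -/
def Kh {d n m : ℕ} (k : Euc d → Euc d → ℝ) (Y : Fin n → Euc d) (w : Fin n → ℝ)
    (R : Matrix (Fin n) (Fin m) ℝ) (v : Fin m → ℝ) (x : Euc d) : ℝ :=
  ∑ i, w i * k x (Y i) * ∑ j, R i j * v j

section Discrete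

variable {d : ℕ} {Ω : Set (Euc d)} {q : ℕ}

lemma MemCq2.exists_kfam_snd (hΩ : IsOpen Ω) {k : Euc d → Euc d → ℝ} (hk : MemCq2 Ω q k) :
    ∃ Γ, IsKFam Ω q k Γ := by
  refine exists_kfam hΩ (fun x hx => ?_) hk.2.1 fun β hβ => ?_
  · exact hk.1.comp (f := fun y : Euc d => (x, y)) (by fun_prop) fun y hy => ⟨hx, hy⟩
  · obtain ⟨g, hg, hgk⟩ := hk.2.2 (fun _ => 0) β (by simpa using hβ)
    refine ⟨g, hg, fun x hx y hy => ?_⟩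
    rw [hgk x hx y hy, mpd2, mpd_zero]

lemma MemCq2.exists_kfam_fst (hΩ : IsOpen Ω) {k : Euc d → Euc d → ℝ} (hk : MemCq2 Ω q k) :
    ∃ Γ, IsKFam Ω q (fun y x => k x y) Γ := by
  have hsw : MapsTo (fun p : Euc d × Euc d => (p.2, p.1)) (closure Ω ×ˢ closure Ω)
      (closure Ω ×ˢ closure Ω) := fun p hp => ⟨hp.2, hp.1⟩
  refine exists_kfam hΩ (fun y hy => ?_) ?_ fun β hβ => ?_
  · exact hk.1.comp (f := fun x : Euc d => (x, y)) (by fun_prop) fun x hx => ⟨hx, hy⟩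
  · exact hk.2.1.comp (by fun_prop) hsw
  · obtain ⟨g, hg, hgk⟩ := hk.2.2 β (fun _ => 0) (by simpa using hβ)
    refine ⟨fun y x => g x y, hg.comp (by fun_prop) hsw, fun y hy x hx => ?_⟩
    change g x y = mpd β (fun x => k x y) x
    rw [hgk x hx y hy, mpd2]
    simp only [mpd_zero]

lemma IsKFam.exists_bound (hΩb : Bornology.IsBounded Ω) {κ : Euc d → Euc d → ℝ}
    {Γ : List (Fin d) → Euc d → Euc d → ℝ} (h : IsKFam Ω q κ Γ) :
    ∃ G : ℝ, 0 ≤ G ∧ ∀ L : List (Fin d), L.length ≤ q → ∀ x ∈ closure Ω, ∀ y ∈ closure Ω,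
      |Γ L x y| ≤ G := by
  have h1 : ∀ L : List (Fin d), ∃ M : ℝ, L.length ≤ q → ∀ x ∈ closure Ω, ∀ y ∈ closure Ω,
      |Γ L x y| ≤ M := by
    intro L
    by_cases hL : L.length ≤ q
    · obtain ⟨M, hM⟩ := (hΩb.isCompact_closure.prod
        hΩb.isCompact_closure).exists_bound_of_continuousOn (h.cont L hL)
      exact ⟨M, fun _ x hx y hy => hM (x, y) ⟨hx, hy⟩⟩
    · exact ⟨0, fun h => absurd h hL⟩
  choose M hM using h1
  obtain ⟨G, hG⟩ := ((List.finite_length_le (Fin d) q).image M).bddAbove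
  refine ⟨max G 0, le_max_right _ _, fun L hL x hx y hy => ?_⟩
  exact (hM L hL x hx y hy).trans ((hG ⟨L, hL, rfl⟩).trans (le_max_left _ _))

lemma IsKFam.cqNorm_le_sSup (hΩ : IsOpen Ω) (hΩb : Bornology.IsBounded Ω)
    {κ : Euc d → Euc d → ℝ} {Γ : List (Fin d) → Euc d → Euc d → ℝ} (h : IsKFam Ω q κ Γ)
    {x : Euc d} (hx : x ∈ closure Ω) :
    CqNorm Ω q (κ x) ≤ sSup ((fun x => CqNorm Ω q (fun y => κ x y)) '' closure Ω) := by
  obtain ⟨G, hG0, hG⟩ := h.exists_bound hΩb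
  refine le_csSup ⟨(Fintype.card (Fin d → Fin (q + 1)) : ℝ) * G, ?_⟩ ⟨x, hx, rfl⟩
  rintro _ ⟨z, hz, rfl⟩
  exact cqNorm_le hΩ (h.fam hz) hG0 fun L hL y hy => hG L hL z hz y (subset_closure hy)

lemma abs_le_sSup_kernel (hΩb : Bornology.IsBounded Ω) {k : Euc d → Euc d → ℝ}
    (hk : ContinuousOn (fun p : Euc d × Euc d => k p.1 p.2) (closure Ω ×ˢ closure Ω))
    {x y : Euc d} (hx : x ∈ closure Ω) (hy : y ∈ closure Ω) :
    |k x y| ≤ sSup ((fun p : Euc d × Euc d => |k p.1 p.2|) '' (closure Ω ×ˢ closure Ω)) := by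
  obtain ⟨M, hM⟩ := (hΩb.isCompact_closure.prod
    hΩb.isCompact_closure).exists_bound_of_continuousOn hk
  refine le_csSup ⟨M, ?_⟩ ⟨(x, y), ⟨hx, hy⟩, rfl⟩
  rintro _ ⟨p, hp, rfl⟩
  exact hM p hp

lemma sSup_kernel_nonneg (k : Euc d → Euc d → ℝ) :
    0 ≤ sSup ((fun p : Euc d × Euc d => |k p.1 p.2|) '' (closure Ω ×ˢ closure Ω)) := by
  refine Real.sSup_nonneg ?_
  rintro _ ⟨p, _, rfl⟩
  exact abs_nonneg _

lemma sum_weight_bound {n : ℕ} {w a : Fin n → ℝ} {CQ B : ℝ} (hw : ∑ i, |w i| ≤ CQ)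
    (hB : 0 ≤ B) (ha : ∀ i, |a i| ≤ B) : |∑ i, w i * a i| ≤ CQ * B := by
  refine (Finset.abs_sum_le_sum_abs _ _).trans ?_
  calc ∑ i, |w i * a i| ≤ ∑ i, |w i| * B := Finset.sum_le_sum fun i _ => by
        rw [abs_mul]
        exact mul_le_mul_of_nonneg_left (ha i) (abs_nonneg _)
    _ = (∑ i, |w i|) * B := by rw [Finset.sum_mul]
    _ ≤ CQ * B := mul_le_mul_of_nonneg_right hw hB

lemma Kh_bound {n m : ℕ} {k : Euc d → Euc d → ℝ} {Y : Fin n → Euc d} {w : Fin n → ℝ}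
    {R : Matrix (Fin n) (Fin m) ℝ} {CQ CI S0 ρ : ℝ} (hw : ∑ i, |w i| ≤ CQ)
    (hCI : 0 ≤ CI) (hR : ∀ i, ∑ j, |R i j| ≤ CI) {x : Euc d} (hS0 : 0 ≤ S0)
    (hS : ∀ i, |k x (Y i)| ≤ S0) {v : Fin m → ℝ} (hρ : 0 ≤ ρ) (hv : ∀ j, |v j| ≤ ρ) :
    |Kh k Y w R v x| ≤ CQ * S0 * CI * ρ := by
  unfold Kh
  simp only [mul_assoc (w _)]
  refine (sum_weight_bound (B := S0 * (CI * ρ)) hw (by positivity) fun i => ?_).trans_eq (by ring)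
  rw [abs_mul]
  exact mul_le_mul (hS i) (sum_weight_bound (hR i) hρ hv) (abs_nonneg _) hS0

lemma Kh_sub {n m : ℕ} (k : Euc d → Euc d → ℝ) (Y : Fin n → Euc d) (w : Fin n → ℝ)
    (R : Matrix (Fin n) (Fin m) ℝ) (v v' : Fin m → ℝ) (x : Euc d) :
    Kh k Y w R (fun j => v j - v' j) x = Kh k Y w R v x - Kh k Y w R v' x := by
  simp only [Kh, mul_sub, Finset.sum_sub_distrib]

lemma Kh_smul {n m : ℕ} (k : Euc d → Euc d → ℝ) (Y : Fin n → Euc d) (w : Fin n → ℝ)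
    (R : Matrix (Fin n) (Fin m) ℝ) (c : ℝ) (v : Fin m → ℝ) (x : Euc d) :
    Kh k Y w R (fun j => c * v j) x = c * Kh k Y w R v x := by
  simp only [Kh, Finset.mul_sum]
  exact Finset.sum_congr rfl fun i _ => Finset.sum_congr rfl fun j _ => by ring

lemma mulVec_system {n m : ℕ} (k : Euc d → Euc d → ℝ) (Y : Fin n → Euc d) (w : Fin n → ℝ)
    (R : Matrix (Fin n) (Fin m) ℝ) (X : Fin m → Euc d) (lam : ℝ) (v : Fin m → ℝ) (i : Fin m) :
    (lam • (1 : Matrix (Fin m) (Fin m) ℝ) -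
      (Matrix.of fun i j => k (X i) (Y j)) * Matrix.diagonal w * R).mulVec v i =
      lam * v i - Kh k Y w R v (X i) := by
  rw [Matrix.sub_mulVec, Matrix.smul_mulVec, Matrix.one_mulVec, ← Matrix.mulVec_mulVec]
  simp only [Pi.sub_apply, Pi.smul_apply, smul_eq_mul, Kh]
  congr 1
  simp only [Matrix.mulVec, dotProduct, Matrix.mul_diagonal, Matrix.of_apply]
  exact Finset.sum_congr rfl fun j _ => by ring

/-- Consistency: for `v` of class `C^q` the discretised operator approximates the integral
operator uniformly on `closure Ω`, with the error of the quadrature applied to `k(x,·) v` plus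
the error of the reconstruction of `v`. -/
lemma exists_consistency (hΩ : IsOpen Ω) (hΩb : Bornology.IsBounded Ω) {k : Euc d → Euc d → ℝ}
    {Γ : List (Fin d) → Euc d → Euc d → ℝ} (hk : IsKFam Ω q k Γ) {qw qR : ℕ} (hqw : qw ≤ q)
    (hqR : qR ≤ q) {CQ : ℝ} (hCQ : 0 ≤ CQ) :
    ∃ c : ℝ, 0 ≤ c ∧ ∀ (n m : ℕ) (Y : Fin n → Euc d) (w : Fin n → ℝ) (X : Fin m → Euc d)
      (R : Matrix (Fin n) (Fin m) ℝ) (a b : ℝ), 0 ≤ a → 0 ≤ b → (∀ i, Y i ∈ closure Ω) →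
      (∑ i, |w i| ≤ CQ) →
      (∀ v : Euc d → ℝ, MemCq Ω qw v →
        |(∫ y in Ω, v y) - ∑ i, w i * v (Y i)| ≤ a * CqNorm Ω qw v) →
      (∀ v : Euc d → ℝ, MemCq Ω qR v →
        ∀ i, |v (Y i) - ∑ j, R i j * v (X j)| ≤ b * CqNorm Ω qR v) →
      ∀ v φ, IsFam Ω q v φ → ∀ x ∈ closure Ω,
        |(∫ y in Ω, k x y * v y) - Kh k Y w R (fun j => v (X j)) x| ≤
          c * (a * sSup ((fun x => CqNorm Ω q (fun y => k x y)) '' closure Ω) +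
            CQ * b * sSup ((fun p : Euc d × Euc d => |k p.1 p.2|) '' (closure Ω ×ˢ closure Ω)))
            * CqNorm Ω q v := by
  obtain ⟨c1, hc1, hmul⟩ := exists_cqNorm_mul (d := d) hΩ hΩb hqw
  obtain ⟨c2, hc2, hmono⟩ := exists_cqNorm_mono (d := d) hΩ hΩb hqR
  refine ⟨c1 + c2, by positivity, fun n m Y w X R a b ha hb hY hw hQ hRc v φ hv x hx => ?_⟩
  have hkc : ContinuousOn (fun p : Euc d × Euc d => k p.1 p.2) (closure Ω ×ˢ closure Ω) := by
    have := hk.cont [] (by simp)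
    rwa [hk.eq] at this
  set Sk := sSup ((fun x => CqNorm Ω q (fun y => k x y)) '' closure Ω) with hSk
  set S0 := sSup ((fun p : Euc d × Euc d => |k p.1 p.2|) '' (closure Ω ×ˢ closure Ω)) with hS0
  have hS0n : 0 ≤ S0 := sSup_kernel_nonneg k
  have hN := cqNorm_nonneg (Ω := Ω) (q := q) v
  have hSkx := hk.cqNorm_le_sSup hΩ hΩb hx
  have hSkn : 0 ≤ Sk := (cqNorm_nonneg _).trans hSkx
  have h1 : |(∫ y in Ω, k x y * v y) - ∑ i, w i * (k x (Y i) * v (Y i))| ≤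
      a * (c1 * (Sk * CqNorm Ω q v)) := by
    refine (hQ (fun y => k x y * v y) (((hk.fam hx).mul hv).mono hqw |>.memCq hΩ)).trans ?_
    refine mul_le_mul_of_nonneg_left ((hmul _ _ _ _ (hk.fam hx) hv).trans ?_) ha
    exact mul_le_mul_of_nonneg_left (mul_le_mul_of_nonneg_right hSkx hN) hc1
  have h2 : |∑ i, w i * (k x (Y i) * v (Y i)) - Kh k Y w R (fun j => v (X j)) x| ≤
      CQ * (S0 * (b * (c2 * CqNorm Ω q v))) := by
    have e : ∑ i, w i * (k x (Y i) * v (Y i)) - Kh k Y w R (fun j => v (X j)) x =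
        ∑ i, w i * (k x (Y i) * (v (Y i) - ∑ j, R i j * v (X j))) := by
      rw [Kh, ← Finset.sum_sub_distrib]
      exact Finset.sum_congr rfl fun i _ => by ring
    rw [e]
    refine sum_weight_bound hw (by positivity) fun i => ?_
    rw [abs_mul]
    refine mul_le_mul (abs_le_sSup_kernel hΩb hkc hx (hY i)) ?_ (abs_nonneg _) hS0n
    exact (hRc v ((hv.mono hqR).memCq hΩ) i).trans
      (mul_le_mul_of_nonneg_left (hmono v φ hv) hb)
  have h3 := abs_sub_le (∫ y in Ω, k x y * v y) (∑ i, w i * (k x (Y i) * v (Y i)))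
    (Kh k Y w R (fun j => v (X j)) x)
  have h4 : 0 ≤ c2 * (a * Sk * CqNorm Ω q v) := by positivity
  have h5 : 0 ≤ c1 * (CQ * b * S0 * CqNorm Ω q v) := by positivity
  linarith

/-- Stability: vectors are controlled in the maximum norm by their image under the system
matrix. The image `s` of a vector `v` under the discretised operator is of class `C^q` with norm
`O(‖v‖_∞)`, so that consistency applies to it and `(lam - K) s` is small up to the residual;
bounded invertibility of `lam - K` then gives the estimate. -/
lemma exists_stability (hΩ : IsOpen Ω) (hΩb : Bornology.IsBounded Ω) {k : Euc d → Euc d → ℝ}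
    (hkc : ContinuousOn (fun p : Euc d × Euc d => k p.1 p.2) (closure Ω ×ˢ closure Ω))
    {Γ : List (Fin d) → Euc d → Euc d → ℝ} (hk : IsKFam Ω q (fun y x => k x y) Γ)
    {lam Cinv : ℝ} (hlam : lam ≠ 0) (hCinv : 0 < Cinv)
    (hinv : ∀ s : Euc d → ℝ, ContinuousOn s (closure Ω) → ∀ B : ℝ, 0 ≤ B →
      (∀ x ∈ closure Ω, |lam * s x - ∫ y in Ω, k x y * s y| ≤ B) →
      ∀ x ∈ closure Ω, |s x| ≤ Cinv * B)
    {CQ CI : ℝ} (hCQ : 0 ≤ CQ) (hCI : 0 ≤ CI) :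
    ∃ Cst > (0 : ℝ), ∃ δ > (0 : ℝ), ∀ (n m : ℕ) (Y : Fin n → Euc d) (w : Fin n → ℝ)
      (X : Fin m → Euc d) (R : Matrix (Fin n) (Fin m) ℝ) (ε : ℝ), 0 ≤ ε → ε ≤ δ →
      (∀ i, Y i ∈ closure Ω) → (∀ i, X i ∈ closure Ω) → (∑ i, |w i| ≤ CQ) →
      (∀ i, ∑ j, |R i j| ≤ CI) →
      (∀ v φ, IsFam Ω q v φ → ∀ x ∈ closure Ω,
        |(∫ y in Ω, k x y * v y) - Kh k Y w R (fun j => v (X j)) x| ≤ ε * CqNorm Ω q v) →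
      ∀ (v : Fin m → ℝ) (ρ : ℝ), 0 ≤ ρ → (∀ i, |lam * v i - Kh k Y w R v (X i)| ≤ ρ) →
        ∀ i, |v i| ≤ Cst * ρ := by
  obtain ⟨G, hG0, hG⟩ := hk.exists_bound hΩb
  set S0 := sSup ((fun p : Euc d × Euc d => |k p.1 p.2|) '' (closure Ω ×ˢ closure Ω)) with hS0
  have hS0n : 0 ≤ S0 := sSup_kernel_nonneg k
  set P := CQ * S0 * CI with hP
  have hPn : 0 ≤ P := by positivity
  set M := (Fintype.card (Fin d → Fin (q + 1)) : ℝ) * (CQ * CI * G) with hM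
  have hMn : 0 ≤ M := by positivity
  have hl : 0 < |lam| := abs_pos.2 hlam
  refine ⟨2 / |lam| * (Cinv * P + 1), by positivity, |lam| / (2 * (Cinv * M + 1)), by positivity,
    fun n m Y w X R ε hε hεδ hY hX hw hR hcons v ρ hρ hres => ?_⟩
  set V := ‖v‖ with hV
  have hVn : 0 ≤ V := norm_nonneg v
  have hvV : ∀ j, |v j| ≤ V := fun j => norm_le_pi_norm v j
  set s : Euc d → ℝ := Kh k Y w R v with hs
  have hsfam : IsFam Ω q s (fun L x => ∑ i, (w i * ∑ j, R i j * v j) * Γ L (Y i) x) := by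
    refine (isFam_sum Finset.univ fun i =>
      (hk.fam (hY i)).const_mul (w i * ∑ j, R i j * v j)).congr fun x _ => ?_
    rw [hs, Kh]
    exact Finset.sum_congr rfl fun i _ => by ring
  have hsN : CqNorm Ω q s ≤ M * V := by
    refine (cqNorm_le hΩ hsfam (B := CQ * (CI * V * G)) (by positivity)
      fun L hL x hx => ?_).trans_eq (by rw [hM]; ring)
    simp only [mul_assoc (w _)]
    refine sum_weight_bound hw (by positivity) fun i => ?_
    rw [abs_mul]
    exact mul_le_mul (sum_weight_bound (hR i) hVn hvV) (hG L hL _ (hY i) x (subset_closure hx))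
      (abs_nonneg _) (by positivity)
  have hsc : ContinuousOn s (closure Ω) := (hsfam.memCq hΩ).2.1
  have hB : ∀ x ∈ closure Ω, |lam * s x - ∫ y in Ω, k x y * s y| ≤ P * ρ + ε * (M * V) := by
    intro x hx
    have h1 : Kh k Y w R (fun j => lam * v j - s (X j)) x =
        lam * s x - Kh k Y w R (fun j => s (X j)) x := by
      rw [Kh_sub, Kh_smul]
    have h2 := Kh_bound hw hCI hR hS0n
      (fun i => abs_le_sSup_kernel hΩb hkc hx (hY i)) hρ hres
    rw [h1] at h2
    have h3 := (hcons s _ hsfam x hx).trans (mul_le_mul_of_nonneg_left hsN hε)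
    rw [abs_sub_comm] at h3
    have h4 := abs_sub_le (lam * s x) (Kh k Y w R (fun j => s (X j)) x)
      (∫ y in Ω, k x y * s y)
    linarith
  have hsB := hinv s hsc _ (by positivity) hB
  have hVb : |lam| * V ≤ Cinv * (P * ρ + ε * (M * V)) + ρ := by
    rw [mul_comm, ← le_div_iff₀ hl]
    refine (pi_norm_le_iff_of_nonneg (by positivity)).2 fun i => ?_
    rw [le_div_iff₀ hl, Real.norm_eq_abs, mul_comm, ← abs_mul]
    have h1 := hsB (X i) (hX i)
    have h2 := hres i
    have h3 := abs_sub_abs_le_abs_sub (lam * v i) (s (X i))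
    linarith
  have hsmall : Cinv * (ε * (M * V)) ≤ |lam| / 2 * V := by
    have h1 : ε * (Cinv * M + 1) ≤ |lam| / 2 := by
      rw [le_div_iff₀ (by positivity)] at hεδ
      linarith
    have h2 : Cinv * ε * M ≤ |lam| / 2 := by nlinarith
    calc Cinv * (ε * (M * V)) = Cinv * ε * M * V := by ring
      _ ≤ _ := mul_le_mul_of_nonneg_right h2 hVn
  intro i
  refine (hvV i).trans ?_
  have : |lam| * V ≤ 2 * ((Cinv * P + 1) * ρ) := by linarith
  calc V = |lam| * V / |lam| := by field_simp
    _ ≤ 2 * ((Cinv * P + 1) * ρ) / |lam| := div_le_div_of_nonneg_right this hl.le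
    _ = _ := by ring

/-- A bound for `v ↦ A v` from below in the maximum norm bounds the row sums of `A⁻¹`. -/
lemma inv_row_sum_le {m : ℕ} {A : Matrix (Fin m) (Fin m) ℝ} (hA : IsUnit A) {Cst : ℝ}
    (h : ∀ v : Fin m → ℝ, ∀ ρ : ℝ, 0 ≤ ρ → (∀ i, |A.mulVec v i| ≤ ρ) → ∀ i, |v i| ≤ Cst * ρ)
    (i : Fin m) : ∑ j, |A⁻¹ i j| ≤ Cst := by
  have hdet : IsUnit A.det := (Matrix.isUnit_iff_isUnit_det A).1 hA
  set r : Fin m → ℝ := fun j => if 0 ≤ A⁻¹ i j then 1 else -1 with hr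
  have h1 : ∀ j, A⁻¹ i j * r j = |A⁻¹ i j| := by
    intro j
    by_cases hj : 0 ≤ A⁻¹ i j
    · simp [hr, hj, abs_of_nonneg hj]
    · simp [hr, hj, abs_of_neg (not_le.1 hj)]
  have h2 : ∀ j, |A.mulVec (A⁻¹.mulVec r) j| ≤ 1 := by
    intro j
    rw [Matrix.mulVec_mulVec, Matrix.mul_nonsing_inv A hdet, Matrix.one_mulVec]
    by_cases hj : 0 ≤ A⁻¹ i j <;> simp [hr, hj]
  have h3 := h _ 1 zero_le_one h2 i
  have h4 : A⁻¹.mulVec r i = ∑ j, |A⁻¹ i j| := by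
    simp only [Matrix.mulVec, dotProduct, h1]
  rw [h4, mul_one] at h3
  exact (le_abs_self _).trans h3

/-- A bound for `v ↦ A v` from above in the maximum norm bounds the row sums of `A`. -/
lemma row_sum_le {m : ℕ} {A : Matrix (Fin m) (Fin m) ℝ} {B : ℝ}
    (h : ∀ v : Fin m → ℝ, (∀ j, |v j| ≤ 1) → ∀ i, |A.mulVec v i| ≤ B)
    (i : Fin m) : ∑ j, |A i j| ≤ B := by
  set r : Fin m → ℝ := fun j => if 0 ≤ A i j then 1 else -1 with hr
  have h1 : ∀ j, A i j * r j = |A i j| := by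
    intro j
    by_cases hj : 0 ≤ A i j
    · simp [hr, hj, abs_of_nonneg hj]
    · simp [hr, hj, abs_of_neg (not_le.1 hj)]
  have h3 := h r (fun j => by by_cases hj : 0 ≤ A i j <;> simp [hr, hj]) i
  have h4 : A.mulVec r i = ∑ j, |A i j| := by
    simp only [Matrix.mulVec, dotProduct, h1]
  rw [h4] at h3
  exact (le_abs_self _).trans h3

end Discrete

/-! ### Signs of the constants, regularity of the solution, and the convergence result -/

section Constants

variable {d : ℕ} {Ω : Set (Euc d)}

lemma cqNorm_one_pos (hΩ : IsOpen Ω) (hΩb : Bornology.IsBounded Ω) (hne : Ω.Nonempty) (p : ℕ) :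
    0 < CqNorm Ω p (fun _ => 1) := by
  obtain ⟨x, hx⟩ := hne
  have h := abs_le_cqNorm hΩ hΩb (isFam_one (q := p)) (L := []) (by simp) hx
  have h0 : (0 : ℝ) < |if ([] : List (Fin d)) = [] then (1 : ℝ) else 0| := by simp
  exact pos_of_mul_pos_right (h0.trans_le h) (by positivity)

lemma nonneg_of_bound_one (hΩ : IsOpen Ω) (hΩb : Bornology.IsBounded Ω) (hne : Ω.Nonempty)
    {p : ℕ} {a C : ℝ} (h : |a| ≤ C * 1 ^ p * CqNorm Ω p (fun _ => 1)) : 0 ≤ C := by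
  rw [one_pow, mul_one] at h
  exact nonneg_of_mul_nonneg_left ((abs_nonneg a).trans h) (cqNorm_one_pos hΩ hΩb hne p)

/-- A convergent quadrature scheme has nodes for some `h`, since a rule without nodes integrates
the constant function `1` to `0`. -/
lemma exists_node (hΩ : IsOpen Ω) (hΩb : Bornology.IsBounded Ω) (hne : Ω.Nonempty)
    {NY : ℝ → ℕ} {Y : (h : ℝ) → Fin (NY h) → Euc d} {w : (h : ℝ) → Fin (NY h) → ℝ}
    {qw : ℕ} (hqw : 0 < qw) {Cw : ℝ}
    (hQconv : ∀ h > (0:ℝ), ∀ v : Euc d → ℝ, MemCq Ω qw v →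
      |(∫ y in Ω, v y) - ∑ i, w h i * v (Y h i)| ≤ Cw * h ^ qw * CqNorm Ω qw v) :
    ∃ h > (0 : ℝ), Nonempty (Fin (NY h)) := by
  by_contra! hcon
  have hvol : 0 < volume.real Ω :=
    ENNReal.toReal_pos (hΩ.measure_pos volume hne).ne' hΩb.measure_lt_top.ne
  have h1 : ∀ h > (0 : ℝ), volume.real Ω ≤ Cw * h ^ qw * CqNorm Ω qw (fun _ => 1) := by
    intro h hh
    have := hcon h hh
    have h2 := hQconv h hh (fun _ => 1) (isFam_one.memCq hΩ)
    simp only [Finset.univ_eq_empty, Finset.sum_empty, sub_zero] at h2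
    simpa using (le_abs_self _).trans h2
  have hlim : Tendsto (fun h : ℝ => Cw * h ^ qw * CqNorm Ω qw (fun _ => 1)) (𝓝[>] 0) (𝓝 0) := by
    have hc : Continuous fun h : ℝ => Cw * h ^ qw * CqNorm Ω qw (fun _ => 1) := by fun_prop
    have := hc.tendsto 0
    simp only [zero_pow hqw.ne', mul_zero, zero_mul] at this
    exact this.mono_left nhdsWithin_le_nhds
  exact hvol.not_ge (ge_of_tendsto hlim (eventually_mem_nhdsWithin.mono fun h hh => h1 h hh))

/-- A continuous solution of the integral equation on `Ω` solves it on `closure Ω`. -/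
lemma solution_on_closure (hΩ : IsOpen Ω) (hΩb : Bornology.IsBounded Ω)
    {k : Euc d → Euc d → ℝ}
    (hkc : ContinuousOn (fun p : Euc d × Euc d => k p.1 p.2) (closure Ω ×ˢ closure Ω))
    {f u : Euc d → ℝ} {lam : ℝ} (hf : ContinuousOn f (closure Ω))
    (hu : ContinuousOn u (closure Ω))
    (h : ∀ x ∈ Ω, lam * u x - ∫ y in Ω, k x y * u y = f x) :
    ∀ x ∈ closure Ω, lam * u x - ∫ y in Ω, k x y * u y = f x := by
  have hc : ContinuousOn (fun x => lam * u x - ∫ y in Ω, k x y * u y) (closure Ω) :=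
    (continuousOn_const.mul hu).sub (continuousOn_integral hΩ hΩb hkc hu)
  exact fun x hx => (show EqOn _ f Ω from h).of_subset_closure hc hf subset_closure subset_rfl hx

/-- A solution of the integral equation inherits the regularity of the data through
`u = lam⁻¹ (f + K u)`. -/
lemma solution_fam (hΩ : IsOpen Ω) (hΩb : Bornology.IsBounded Ω) {q : ℕ}
    {k : Euc d → Euc d → ℝ} {Γ : List (Fin d) → Euc d → Euc d → ℝ}
    (hk : IsKFam Ω q (fun y x => k x y) Γ) {f u : Euc d → ℝ} (hf : MemCq Ω q f)
    {lam : ℝ} (hlam : lam ≠ 0) (hu : ContinuousOn u (closure Ω))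
    (h : ∀ x ∈ closure Ω, lam * u x - ∫ y in Ω, k x y * u y = f x) :
    ∃ φ, IsFam Ω q u φ := by
  obtain ⟨φ, hφ⟩ := hf.exists_fam hΩ
  refine ⟨_, ((hφ.add (hk.integral hΩ hΩb hu)).const_mul lam⁻¹).congr fun x hx => ?_⟩
  simp only [← h x hx, sub_add_cancel]
  rw [inv_mul_cancel_left₀ hlam]

end Constants

/-- **Decoupled Nyström method: well-posedness, conditioning and error estimate.**
The hypothesis that `lam` is not in the spectrum of the integral operator `K` on `C^0(Ω̄)`
is rendered (equivalently, since `lam ≠ 0` and `K` is compact) as: `lam • I - K` is a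
bijection of `C^0(Ω̄)`, i.e. for every continuous right-hand side the equation has a
solution, unique up to equality on `closure Ω`. -/
theorem decoupled_nystrom_convergence
    (d q : ℕ) (hq : 1 ≤ q)
    (Ω : Set (Euc d)) (hΩo : IsOpen Ω) (hΩb : Bornology.IsBounded Ω)
    (k : Euc d → Euc d → ℝ) (hk : MemCq2 Ω q k)
    (f : Euc d → ℝ) (hf : MemCq Ω q f)
    (lam : ℝ) (hlam : lam ≠ 0)
    (hspec : ∀ g : Euc d → ℝ, ContinuousOn g (closure Ω) →
      (∃ u : Euc d → ℝ, ContinuousOn u (closure Ω) ∧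
        ∀ x ∈ closure Ω, lam * u x - ∫ y in Ω, k x y * u y = g x) ∧
      (∀ u₁ u₂ : Euc d → ℝ,
        (ContinuousOn u₁ (closure Ω) ∧
          ∀ x ∈ closure Ω, lam * u₁ x - ∫ y in Ω, k x y * u₁ y = g x) →
        (ContinuousOn u₂ (closure Ω) ∧
          ∀ x ∈ closure Ω, lam * u₂ x - ∫ y in Ω, k x y * u₂ y = g x) →
        Set.EqOn u₁ u₂ (closure Ω)))
    -- the quadrature scheme: nodes `Y`, weights `w`
    (NY : ℝ → ℕ) (Y : (h : ℝ) → Fin (NY h) → Euc d) (w : (h : ℝ) → Fin (NY h) → ℝ)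
    (hYmem : ∀ h > (0:ℝ), ∀ i, Y h i ∈ closure Ω)
    (qw : ℕ) (hqw : 0 < qw) (hqwq : qw ≤ q) (CQ Cw : ℝ)
    (hQstab : ∀ h > (0:ℝ), ∑ i, |w h i| ≤ CQ)
    (hQconv : ∀ h > (0:ℝ), ∀ v : Euc d → ℝ, MemCq Ω qw v →
      |(∫ y in Ω, v y) - ∑ i, w h i * v (Y h i)| ≤ Cw * h ^ qw * CqNorm Ω qw v)
    -- the reconstruction scheme: nodes `X`, matrices `R`
    (MX : ℝ → ℕ) (X : (h : ℝ) → Fin (MX h) → Euc d)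
    (hXmem : ∀ h > (0:ℝ), ∀ i, X h i ∈ closure Ω)
    (R : (hX : ℝ) → (hY : ℝ) → Matrix (Fin (NY hY)) (Fin (MX hX)) ℝ)
    (qR : ℕ) (hqR : 0 < qR) (hqRq : qR ≤ q) (CI CR : ℝ)
    (hRstab : ∀ hX > (0:ℝ), ∀ hY > (0:ℝ), ∀ i, ∑ j, |R hX hY i j| ≤ CI)
    (hRconv : ∀ hX > (0:ℝ), ∀ hY > (0:ℝ), ∀ v : Euc d → ℝ, MemCq Ω qR v →
      ∀ i, |v (Y hY i) - ∑ j, R hX hY i j * v (X hX j)| ≤ CR * hX ^ qR * CqNorm Ω qR v) :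
    ∃ h₀ > (0:ℝ), ∃ Ccond : ℝ, ∃ C > (0:ℝ), ∀ hX hY : ℝ,
      0 < hX → hX < h₀ → 0 < hY → hY < h₀ →
      let A : Matrix (Fin (MX hX)) (Fin (MX hX)) ℝ :=
        lam • (1 : Matrix (Fin (MX hX)) (Fin (MX hX)) ℝ) -
          (Matrix.of fun i j => k (X hX i) (Y hY j)) * Matrix.diagonal (w hY) * R hX hY
      -- unique solvability of the linear system
      (∃! uhat : Fin (MX hX) → ℝ, A.mulVec uhat = fun i => f (X hX i)) ∧
      -- the matrix is invertible and its ∞-norm condition number is bounded uniformly in h⃗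
      IsUnit A ∧
      (⨆ i, ∑ j, |A i j|) * (⨆ i, ∑ j, |A⁻¹ i j|) ≤ Ccond ∧
      -- error estimate for the Nyström interpolant
      (∀ (uhat : Fin (MX hX) → ℝ) (u : Euc d → ℝ),
        A.mulVec uhat = (fun i => f (X hX i)) →
        ContinuousOn u (closure Ω) →
        (∀ x ∈ Ω, lam * u x - ∫ y in Ω, k x y * u y = f x) →
        supNorm Ω (fun x => u x - lam⁻¹ *
            ((∑ i, w hY i * k x (Y hY i) * (∑ j, R hX hY i j * uhat j)) + f x)) ≤
          C * (Cw * sSup ((fun x => CqNorm Ω q (fun y => k x y)) '' closure Ω) * hY ^ qw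
              + CQ * CR *
                sSup ((fun p : Euc d × Euc d => |k p.1 p.2|) '' (closure Ω ×ˢ closure Ω))
                * hX ^ qR)
            * CqNorm Ω q u) := by
  rcases Ω.eq_empty_or_nonempty with rfl | hne
  · -- without points there are no nodes, and all norms are suprema over the empty set
    refine ⟨1, one_pos, 0, 1, one_pos, fun hX hY hX0 _ hY0 _ => ?_⟩
    have hE : IsEmpty (Fin (MX hX)) := ⟨fun i => by simpa using hXmem hX hX0 i⟩
    refine ⟨⟨0, Subsingleton.elim _ _, fun _ _ => Subsingleton.elim _ _⟩,
      isUnit_of_subsingleton _, by simp, fun _ u _ _ _ => ?_⟩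
    simp [supNorm]
  have hCQ : 0 ≤ CQ := (Finset.sum_nonneg fun _ _ => abs_nonneg _).trans (hQstab 1 one_pos)
  have hCw : 0 ≤ Cw := nonneg_of_bound_one hΩo hΩb hne
    (hQconv 1 one_pos (fun _ => 1) (isFam_one.memCq hΩo))
  obtain ⟨h1, hh1, ⟨i1⟩⟩ := exists_node hΩo hΩb hne hqw hQconv
  have hCR : 0 ≤ CR := nonneg_of_bound_one hΩo hΩb hne
    (hRconv 1 one_pos h1 hh1 (fun _ => 1) (isFam_one.memCq hΩo) i1)
  have hCI : 0 ≤ CI := (Finset.sum_nonneg fun _ _ => abs_nonneg _).trans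
    (hRstab 1 one_pos h1 hh1 i1)
  have hkc := hk.2.1
  obtain ⟨Γ₁, hΓ₁⟩ := hk.exists_kfam_snd hΩo
  obtain ⟨Γ₂, hΓ₂⟩ := hk.exists_kfam_fst hΩo
  obtain ⟨Cinv, hCinv, hinv⟩ := exists_inv_bound hΩo hΩb hkc lam hspec
  obtain ⟨c, hc, hcons⟩ := exists_consistency hΩo hΩb hΓ₁ hqwq hqRq hCQ
  obtain ⟨Cst, hCst, δ, hδ, hstab⟩ := exists_stability hΩo hΩb hkc hΓ₂ hlam hCinv hinv hCQ hCI
  set Sk := sSup ((fun x => CqNorm Ω q (fun y => k x y)) '' closure Ω) with hSk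
  set S0 := sSup ((fun p : Euc d × Euc d => |k p.1 p.2|) '' (closure Ω ×ˢ closure Ω)) with hS0
  have hS0n : 0 ≤ S0 := sSup_kernel_nonneg k
  have hSkn : 0 ≤ Sk := by
    obtain ⟨x, hx⟩ := hne
    exact (cqNorm_nonneg _).trans (hΓ₁.cqNorm_le_sSup hΩo hΩb (subset_closure hx))
  set D := c * (Cw * Sk + CQ * CR * S0) with hD
  have hDn : 0 ≤ D := by positivity
  set P := CQ * S0 * CI with hP
  have hPn : 0 ≤ P := by positivity
  have hl : 0 < |lam|⁻¹ := inv_pos.2 (abs_pos.2 hlam)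
  refine ⟨min 1 (δ / (D + 1)), lt_min one_pos (by positivity), (|lam| + P) * Cst,
    |lam|⁻¹ * (1 + P * Cst) * c + 1, by positivity, fun hX hY hX0 hX1 hY0 hY1 => ?_⟩
  intro A
  set ε := c * (Cw * hY ^ qw * Sk + CQ * (CR * hX ^ qR) * S0) with hε
  have hεn : 0 ≤ ε := by positivity
  have hεδ : ε ≤ δ := by
    have hpow : ∀ (h : ℝ) (p : ℕ), 0 < h → h < min 1 (δ / (D + 1)) → 0 < p →
        h ^ p ≤ δ / (D + 1) := fun h p h0 hlt hp =>
      (pow_le_of_le_one h0.le (hlt.le.trans (min_le_left _ _)) hp.ne').trans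
        (hlt.le.trans (min_le_right _ _))
    have hp1 := hpow hY qw hY0 hY1 hqw
    have hp2 := hpow hX qR hX0 hX1 hqR
    calc ε = c * (Cw * Sk * hY ^ qw + CQ * CR * S0 * hX ^ qR) := by rw [hε]; ring
      _ ≤ c * (Cw * Sk * (δ / (D + 1)) + CQ * CR * S0 * (δ / (D + 1))) := by gcongr
      _ = D * (δ / (D + 1)) := by rw [hD]; ring
      _ ≤ (D + 1) * (δ / (D + 1)) := by gcongr; linarith
      _ = δ := mul_div_cancel₀ _ (by positivity)
  have hconsh := hcons _ _ (Y hY) (w hY) (X hX) (R hX hY) (Cw * hY ^ qw) (CR * hX ^ qR)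
    (by positivity) (by positivity) (hYmem hY hY0) (hQstab hY hY0) (hQconv hY hY0)
    (hRconv hX hX0 hY hY0)
  have hA : ∀ v i, A.mulVec v i = lam * v i - Kh k (Y hY) (w hY) (R hX hY) v (X hX i) :=
    mulVec_system k (Y hY) (w hY) (R hX hY) (X hX) lam
  have hstabA : ∀ v : Fin (MX hX) → ℝ, ∀ ρ : ℝ, 0 ≤ ρ → (∀ i, |A.mulVec v i| ≤ ρ) →
      ∀ i, |v i| ≤ Cst * ρ := by
    intro v ρ hρ hv
    refine hstab _ _ (Y hY) (w hY) (X hX) (R hX hY) ε hεn hεδ (hYmem hY hY0) (hXmem hX hX0)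
      (hQstab hY hY0) (hRstab hX hX0 hY hY0) hconsh v ρ hρ fun i => ?_
    rw [← hA]
    exact hv i
  have hKh : ∀ (v : Fin (MX hX) → ℝ) (ρ : ℝ), 0 ≤ ρ → (∀ j, |v j| ≤ ρ) → ∀ x ∈ closure Ω,
      |Kh k (Y hY) (w hY) (R hX hY) v x| ≤ P * ρ := fun v ρ hρ hv x hx =>
    Kh_bound (hQstab hY hY0) hCI (hRstab hX hX0 hY hY0) hS0n
      (fun i => abs_le_sSup_kernel hΩb hkc hx (hYmem hY hY0 i)) hρ hv
  have hinj : Function.Injective A.mulVec := by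
    intro v v' hvv
    funext i
    have h0 := hstabA (v - v') 0 le_rfl (fun i => by
      rw [Matrix.mulVec_sub]
      simp [hvv]) i
    rw [mul_zero] at h0
    exact sub_eq_zero.1 (abs_nonpos_iff.1 h0)
  have hunit : IsUnit A := Matrix.mulVec_injective_iff_isUnit.1 hinj
  have hdet : IsUnit A.det := (Matrix.isUnit_iff_isUnit_det A).1 hunit
  refine ⟨⟨A⁻¹.mulVec fun i => f (X hX i), ?_, fun v hv => hinj ?_⟩, hunit, ?_, ?_⟩
  · simp only [Matrix.mulVec_mulVec, Matrix.mul_nonsing_inv A hdet, Matrix.one_mulVec]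
  · simp only [Matrix.mulVec_mulVec, Matrix.mul_nonsing_inv A hdet, Matrix.one_mulVec]
    exact hv
  · refine mul_le_mul (Real.iSup_le (row_sum_le fun v hv i => ?_) (by positivity))
      (Real.iSup_le (inv_row_sum_le hunit hstabA) hCst.le)
      (Real.iSup_nonneg fun i => Finset.sum_nonneg fun _ _ => abs_nonneg _) (by positivity)
    rw [hA]
    have hb1 := hKh v 1 zero_le_one hv (X hX i) (hXmem hX hX0 i)
    have hb2 := mul_le_mul_of_nonneg_left (hv i) (abs_nonneg lam)
    rw [← abs_mul] at hb2
    have hb3 := abs_sub (lam * v i) (Kh k (Y hY) (w hY) (R hX hY) v (X hX i))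
    linarith
  · intro uhat u huhat hu hueq
    have hueq' := solution_on_closure hΩo hΩb hkc hf.2.1 hu hueq
    obtain ⟨φ, hφ⟩ := solution_fam hΩo hΩb hΓ₂ hf hlam hu hueq'
    have hN := cqNorm_nonneg (Ω := Ω) (q := q) u
    have hcu := hconsh u φ hφ
    set E := ε * CqNorm Ω q u with hE
    have hEn : 0 ≤ E := by positivity
    set e : Fin (MX hX) → ℝ := fun j => uhat j - u (X hX j) with he
    -- the nodal error solves the discrete system with the consistency error as data
    have hAe : ∀ i, |A.mulVec e i| ≤ E := by
      intro i
      have h1 := congrFun huhat i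
      rw [hA] at h1
      have h2 := hueq' (X hX i) (hXmem hX hX0 i)
      have h3 := hcu (X hX i) (hXmem hX hX0 i)
      rw [abs_sub_comm] at h3
      rw [hA, he, Kh_sub]
      convert h3 using 2
      linarith
    have hee := hstabA e E hEn hAe
    have hKe := hKh e (Cst * E) (by positivity) hee
    refine Real.sSup_le ?_ (by positivity)
    rintro _ ⟨x, hx, rfl⟩
    have h1 : u x - lam⁻¹ * ((∑ i, w hY i * k x (Y hY i) * (∑ j, R hX hY i j * uhat j)) + f x) =
        lam⁻¹ * (((∫ y in Ω, k x y * u y) -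
          Kh k (Y hY) (w hY) (R hX hY) (fun j => u (X hX j)) x) -
          Kh k (Y hY) (w hY) (R hX hY) e x) := by
      change u x - lam⁻¹ * (Kh k (Y hY) (w hY) (R hX hY) uhat x + f x) = _
      rw [he, Kh_sub, ← hueq' x hx]
      field_simp
      ring
    have h2 := (abs_sub _ _).trans (add_le_add (hcu x hx) (hKe x hx))
    simp only [h1]
    rw [abs_mul, abs_inv]
    calc _ ≤ |lam|⁻¹ * (E + P * (Cst * E)) := mul_le_mul_of_nonneg_left h2 hl.le
      _ = |lam|⁻¹ * (1 + P * Cst) * c * (Cw * Sk * hY ^ qw + CQ * CR * S0 * hX ^ qR) *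
          CqNorm Ω q u := by rw [hE, hε]; ring
      _ ≤ _ := by
        gcongr
        linarith

end
end

section
/- On Ω = (0,1), for N a positive integer, define the duplicated-node rectangle rule with 2N nodes y_i = i/N for 1 ≤ i ≤ N and y_i = (i−N)/N − 1/N² for N+1 ≤ i ≤ 2N, and weights w_i = 1 + 1/N for 1 ≤ i ≤ N and w_i = −1 for N+1 ≤ i ≤ 2N. Then: (1) the 1-norm of the weights satisfies Σ_{i=1}^{2N} |w_i| = 2N + 1, so the scheme is unstable; yet (2) there exists a constant C (independent of N and f) such that |∫_0^1 f(y) dy − Σ_{i=1}^{2N} w_i f(y_i)| ≤ C N^{-1} ‖f‖_{C^1([0,1])} for every f ∈ C^1([0,1]); in particular the scheme converges with order 1 on C^1 functions. -/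
/-!
The rule is the right rectangle rule plus a perturbation. Grouping the node `i/N` with its
duplicate `i/N - 1/N²` gives
`∑ w_i f(y_i) = ∑ (1/N) f(i/N) + ∑ (f(i/N) - f(i/N - 1/N²))`.
By the mean value inequality (`abs_sub_le_C1normI`) each of the `N` differences is at most
`‖f‖_{C^1} / N²`, so the perturbation is at most `‖f‖_{C^1} / N` although the weights have
1-norm `N (1 + 1/N) + N = 2N + 1`. The error constant is therefore `C_w + 1`.
-/

open MeasureTheory Set Filter Topology

noncomputable section

/-- The `C^1([0,1])` norm `‖f‖_{C^1} = ‖f‖_∞ + ‖f'‖_∞`, where derivatives are taken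
within `[0,1]` (one-sided at the endpoints). -/
noncomputable def C1normI (f : ℝ → ℝ) : ℝ :=
  sSup ((fun x => |f x|) '' Set.Icc (0:ℝ) 1) +
    sSup ((fun x => |derivWithin f (Set.Icc (0:ℝ) 1) x|) '' Set.Icc (0:ℝ) 1)

/-- Nodes of the duplicated-node rectangle rule: `y_i = i/N` for `1 ≤ i ≤ N` and
`y_i = (i-N)/N - 1/N²` for `N+1 ≤ i ≤ 2N`. -/
noncomputable def dupNode (N i : ℕ) : ℝ :=
  if i ≤ N then (i : ℝ) / N else ((i : ℝ) - N) / N - 1 / (N:ℝ) ^ 2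

/-- Weights of the duplicated-node rectangle rule: `w_i = 1 + 1/N` for `1 ≤ i ≤ N` and
`w_i = -1` for `N+1 ≤ i ≤ 2N`. -/
noncomputable def dupWeight (N i : ℕ) : ℝ :=
  if i ≤ N then 1 + 1 / (N:ℝ) else -1

/-- Splits the sum over `1 ≤ i ≤ 2N` into the two halves, both indexed by `0 ≤ i < N`. -/
lemma sum_Icc_two_mul (N : ℕ) (g : ℕ → ℝ) :
    ∑ i ∈ Finset.Icc 1 (2 * N), g i =
      ∑ i ∈ Finset.range N, g (i + 1) + ∑ i ∈ Finset.range N, g (N + i + 1) := by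
  have h : Finset.Icc 1 (2 * N) = Finset.Ico 1 (N + N + 1) := by
    ext i
    simp only [Finset.mem_Icc, Finset.mem_Ico]
    omega
  rw [h, Finset.sum_Ico_eq_sum_range, Nat.add_sub_cancel, Finset.sum_range_add]
  congr 1 <;> refine Finset.sum_congr rfl fun i _ => ?_ <;> congr 1 <;> omega

lemma dupWeight_left {N i : ℕ} (hi : i < N) : dupWeight N (i + 1) = 1 + 1 / (N : ℝ) :=
  if_pos hi

lemma dupWeight_right (N i : ℕ) : dupWeight N (N + i + 1) = -1 :=
  if_neg (by omega)

lemma dupNode_left {N i : ℕ} (hi : i < N) : dupNode N (i + 1) = ((i + 1 : ℕ) : ℝ) / N :=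
  if_pos hi

lemma dupNode_right (N i : ℕ) :
    dupNode N (N + i + 1) = ((i + 1 : ℕ) : ℝ) / N - 1 / (N : ℝ) ^ 2 := by
  rw [dupNode, if_neg (by omega)]
  push_cast
  ring

/-- Mean value inequality on `[0,1]`. The derivative of a `C^1` function is bounded on the compact
interval, so its supremum in `C1normI` is genuine rather than the junk value `0`. -/
lemma abs_sub_le_C1normI {f : ℝ → ℝ} (hf : ContDiffOn ℝ 1 f (Icc 0 1)) {x y : ℝ}
    (hx : x ∈ Icc (0 : ℝ) 1) (hy : y ∈ Icc (0 : ℝ) 1) :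
    |f x - f y| ≤ C1normI f * |x - y| := by
  have hd : ContinuousOn (derivWithin f (Icc (0 : ℝ) 1)) (Icc 0 1) :=
    hf.continuousOn_derivWithin (uniqueDiffOn_Icc one_pos) le_rfl
  have hbdd : BddAbove ((fun x => |derivWithin f (Icc (0 : ℝ) 1) x|) '' Icc (0 : ℝ) 1) :=
    isCompact_Icc.bddAbove_image hd.abs
  have h0 : 0 ≤ sSup ((fun x => |f x|) '' Icc (0 : ℝ) 1) := by
    refine Real.sSup_nonneg ?_
    rintro _ ⟨z, _, rfl⟩
    exact abs_nonneg _
  refine (convex_Icc (0 : ℝ) 1).norm_image_sub_le_of_norm_derivWithin_le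
    (hf.differentiableOn one_ne_zero) (fun z hz => ?_) hy hx
  have h1 := le_csSup hbdd (mem_image_of_mem _ hz)
  rw [Real.norm_eq_abs, C1normI]
  linarith

/-- **The duplicated-node rectangle rule is unstable yet convergent with order 1:**
(1) `∑_{i=1}^{2N} |w_i| = 2N + 1` (so the weights' 1-norms are unbounded in `N`), and
(2) there is a constant `C`, independent of `N` and `f`, such that
`|∫_0^1 f - ∑_{i=1}^{2N} w_i f(y_i)| ≤ C N⁻¹ ‖f‖_{C^1([0,1])}` for all `f ∈ C^1([0,1])`.
The standard error bound for the (right) rectangle rule is taken as a hypothesis. -/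
theorem duplicated_node_rectangle_rule
    (Cw : ℝ)
    (hrect : ∀ N : ℕ, 0 < N → ∀ f : ℝ → ℝ, ContDiffOn ℝ 1 f (Set.Icc 0 1) →
      |(∫ y in (0:ℝ)..1, f y) -
          ∑ i ∈ Finset.range N, ((N:ℝ))⁻¹ * f ((i + 1 : ℕ) / N)| ≤
        Cw * ((N:ℝ))⁻¹ * C1normI f) :
    -- (1) instability: the 1-norm of the weights equals 2N + 1
    (∀ N : ℕ, 0 < N →
      ∑ i ∈ Finset.Icc 1 (2 * N), |dupWeight N i| = 2 * (N:ℝ) + 1) ∧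
    -- (2) order-1 convergence on C¹ functions
    (∃ C : ℝ, ∀ N : ℕ, 0 < N → ∀ f : ℝ → ℝ, ContDiffOn ℝ 1 f (Set.Icc 0 1) →
      |(∫ y in (0:ℝ)..1, f y) -
          ∑ i ∈ Finset.Icc 1 (2 * N), dupWeight N i * f (dupNode N i)| ≤
        C * ((N:ℝ))⁻¹ * C1normI f) := by
  refine ⟨fun N hN => ?_, Cw + 1, fun N hN f hf => ?_⟩
  · have hN' : (0 : ℝ) < N := Nat.cast_pos.2 hN
    rw [sum_Icc_two_mul, Finset.sum_congr rfl fun i hi => by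
      rw [dupWeight_left (Finset.mem_range.1 hi), abs_of_pos (by positivity)]]
    simp only [dupWeight_right, abs_neg, abs_one, Finset.sum_const, Finset.card_range,
      nsmul_eq_mul]
    field_simp
    ring
  · have hN' : (0 : ℝ) < N := Nat.cast_pos.2 hN
    have hsplit : ∑ i ∈ Finset.Icc 1 (2 * N), dupWeight N i * f (dupNode N i) =
        ∑ i ∈ Finset.range N, ((N : ℝ))⁻¹ * f ((i + 1 : ℕ) / N) +
          ∑ i ∈ Finset.range N,
            (f ((i + 1 : ℕ) / N) - f ((i + 1 : ℕ) / N - 1 / (N : ℝ) ^ 2)) := by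
      rw [sum_Icc_two_mul, ← Finset.sum_add_distrib, ← Finset.sum_add_distrib]
      refine Finset.sum_congr rfl fun i hi => ?_
      rw [dupWeight_left (Finset.mem_range.1 hi), dupNode_left (Finset.mem_range.1 hi),
        dupWeight_right, dupNode_right]
      ring
    have hterm : ∀ i ∈ Finset.range N,
        |f ((i + 1 : ℕ) / N) - f ((i + 1 : ℕ) / N - 1 / (N : ℝ) ^ 2)| ≤
          C1normI f * (1 / (N : ℝ) ^ 2) := by
      intro i hi
      have hle : ((i + 1 : ℕ) : ℝ) / N ≤ 1 :=
        (div_le_one hN').2 (Nat.cast_le.2 (Finset.mem_range.1 hi))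
      have hsq : 0 < 1 / (N : ℝ) ^ 2 := by positivity
      -- The shifted node stays in `[0,1]` because `1/N² ≤ 1/N ≤ (i+1)/N`.
      have hge : 1 / (N : ℝ) ^ 2 ≤ ((i + 1 : ℕ) : ℝ) / N := by
        have h1 : (1 : ℝ) ≤ N := Nat.one_le_cast.2 hN
        have h2 : (1 : ℝ) ≤ ((i + 1 : ℕ) : ℝ) := Nat.one_le_cast.2 (by omega)
        rw [div_le_div_iff₀ (by positivity) hN']
        nlinarith [mul_le_mul h2 h1 zero_le_one (by positivity)]
      have h := abs_sub_le_C1normI hf (x := ((i + 1 : ℕ) : ℝ) / N)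
        (y := ((i + 1 : ℕ) : ℝ) / N - 1 / (N : ℝ) ^ 2)
        ⟨by linarith, hle⟩ ⟨by linarith, by linarith⟩
      rwa [sub_sub_cancel, abs_of_pos hsq] at h
    have hpert : |∑ i ∈ Finset.range N,
        (f ((i + 1 : ℕ) / N) - f ((i + 1 : ℕ) / N - 1 / (N : ℝ) ^ 2))| ≤
          ((N : ℝ))⁻¹ * C1normI f := by
      refine (Finset.abs_sum_le_sum_abs _ _).trans ((Finset.sum_le_sum hterm).trans_eq ?_)
      rw [Finset.sum_const, Finset.card_range, nsmul_eq_mul]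
      field_simp
    rw [hsplit, ← sub_sub]
    refine (abs_sub _ _).trans ((add_le_add (hrect N hN f hf) hpert).trans_eq ?_)
    ring

end
end

section
/- Let Ω ⊂ ℝ^d be a bounded open domain and let {(Y_h, w_h)}_{h>0} be a quadrature scheme convergent with order q > 0, i.e. |∫_Ω v − Σ_i w_{h,i} v(y_{h,i})| ≤ C_w h^q ‖v‖_{C^q(Ω̄)} for all v ∈ C^q(Ω̄). Then the fill distance of Y_h tends to zero as h → 0⁺: for every r > 0 there exists h_0 > 0 such that for all 0 < h < h_0, every open ball of radius r contained in Ω contains at least one node of Y_h. -/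
/-!
The proof tests the quadrature rule against translates of one fixed bump function.

Fix `r > 0` and a smooth bump `φ ≥ 0` centred at `0` with support `ball 0 r`. If
`ball z r ⊆ Ω` contained no node of `Y_h`, then the translate `φ (· - z)` would vanish at every
node, so its quadrature sum would be zero, while its integral over `Ω` equals `I = ∫ φ > 0`
independently of `z`. Since partial derivatives commute with translations (`mpd_translate`), the
`C^q` norm of every translate is at most the constant `M = ‖φ‖_{C^q(ℝ^d)}`
(`CqNorm_translate_le`), which is finite because `φ` is smooth with compact support. Convergence
of the scheme then gives `I ≤ |C_w| M h^q`, which fails for small `h`, uniformly in `z`.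
-/

open MeasureTheory Set Filter Topology

noncomputable section

/-- A property of functions preserved by all first-order partial derivatives is preserved by
`mpd α`. -/
lemma mpd_induction {d : ℕ} {P : (Euc d → ℝ) → Prop} (hP : ∀ i f, P f → P (pd i f))
    (α : Fin d → ℕ) {f : Euc d → ℝ} (hf : P f) : P (mpd α f) := by
  unfold mpd
  have hiter : ∀ (n : ℕ) (i : Fin d) (g : Euc d → ℝ), P g → P ((pd i)^[n] g) := by
    intro n i
    induction n with
    | zero => exact fun g hg => hg
    | succ n ih => exact fun g hg => ih _ (hP i g hg)
  induction List.finRange d with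
  | nil => exact hf
  | cons i l ih => exact hiter _ i _ ih

lemma pd_translate {d : ℕ} (z : Euc d) (i : Fin d) (f : Euc d → ℝ) :
    pd i (fun x => f (x - z)) = fun x => pd i f (x - z) := by
  funext x
  simp only [pd, fderiv_comp_sub]

lemma mpd_translate {d : ℕ} (z : Euc d) (α : Fin d → ℕ) (f : Euc d → ℝ) :
    mpd α (fun x => f (x - z)) = fun x => mpd α f (x - z) := by
  have hsemi : ∀ i : Fin d, Function.Semiconj
      (fun (g : Euc d → ℝ) (x : Euc d) => g (x - z)) (pd i) (pd i) :=
    fun i g => (pd_translate z i g).symm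
  unfold mpd
  induction List.finRange d with
  | nil => rfl
  | cons i l ih =>
    simp only [List.foldr_cons, Function.comp_apply]
    rw [ih]
    exact (((hsemi i).iterate_right (α i)) _).symm

lemma pd_smooth_compact {d : ℕ} (i : Fin d) (f : Euc d → ℝ)
    (hf : ContDiff ℝ (⊤ : ℕ∞) f ∧ HasCompactSupport f) :
    ContDiff ℝ (⊤ : ℕ∞) (pd i f) ∧ HasCompactSupport (pd i f) := by
  refine ⟨?_, hf.2.fderiv_apply ℝ _⟩
  exact (hf.1.fderiv_right (m := (⊤ : ℕ∞)) (by norm_cast)).clm_apply contDiff_const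

lemma mpd_smooth_compact {d : ℕ} (α : Fin d → ℕ) {f : Euc d → ℝ}
    (hf : ContDiff ℝ (⊤ : ℕ∞) f) (hc : HasCompactSupport f) :
    ContDiff ℝ (⊤ : ℕ∞) (mpd α f) ∧ HasCompactSupport (mpd α f) :=
  mpd_induction (P := fun f => ContDiff ℝ (⊤ : ℕ∞) f ∧ HasCompactSupport f)
    pd_smooth_compact α ⟨hf, hc⟩

lemma memCq_of_smooth_compact {d : ℕ} (Ω : Set (Euc d)) (q : ℕ) {f : Euc d → ℝ}
    (hf : ContDiff ℝ (⊤ : ℕ∞) f) (hc : HasCompactSupport f) : MemCq Ω q f := by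
  refine ⟨(hf.of_le (by exact_mod_cast le_top)).contDiffOn, hf.continuous.continuousOn, ?_⟩
  intro α _
  exact ⟨mpd α f, (mpd_smooth_compact α hf hc).1.continuous.continuousOn, fun _ _ => rfl⟩

/-- Translates of a smooth compactly supported function have `C^q` norm on any `Ω` bounded by
the norm of the function on the whole space. Compact support ensures that the suprema over the
whole space are genuine. -/
lemma CqNorm_translate_le {d : ℕ} (Ω : Set (Euc d)) (q : ℕ) {f : Euc d → ℝ}
    (hf : ContDiff ℝ (⊤ : ℕ∞) f) (hc : HasCompactSupport f) (z : Euc d) :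
    CqNorm Ω q (fun x => f (x - z)) ≤ CqNorm univ q f := by
  unfold CqNorm
  refine Finset.sum_le_sum fun α _ => ?_
  split_ifs
  · refine mul_le_mul_of_nonneg_left ?_ (by positivity)
    obtain ⟨hs, hk⟩ := mpd_smooth_compact (fun i => (α i : ℕ)) hf hc
    obtain ⟨C, hC⟩ := hs.continuous.bounded_above_of_compact_support hk
    have hbdd : BddAbove ((fun x => |mpd (fun i => (α i : ℕ)) f x|) '' univ) :=
      ⟨C, by rintro _ ⟨x, -, rfl⟩; exact hC x⟩
    rw [mpd_translate]
    refine Real.sSup_le ?_ (Real.sSup_nonneg ?_)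
    · rintro _ ⟨x, -, rfl⟩
      exact le_csSup hbdd ⟨x - z, mem_univ _, rfl⟩
    · rintro _ ⟨x, -, rfl⟩
      exact abs_nonneg _
  · exact le_rfl

lemma CqNorm_nonneg {d : ℕ} (Ω : Set (Euc d)) (q : ℕ) (f : Euc d → ℝ) : 0 ≤ CqNorm Ω q f := by
  refine Finset.sum_nonneg fun α _ => ?_
  split_ifs
  · refine mul_nonneg (by positivity) (Real.sSup_nonneg ?_)
    rintro _ ⟨x, -, rfl⟩
    exact abs_nonneg _
  · exact le_rfl

/-- **The nodes of a convergent quadrature scheme fill up the domain:** if the scheme is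
convergent with order `q > 0`, then the fill distance of `Y_h` tends to zero as `h → 0⁺`:
for every `r > 0` there is `h₀ > 0` such that for all `0 < h < h₀`, every open ball of
radius `r` contained in `Ω` contains at least one quadrature node. -/
theorem fill_distance_tendsto_zero
    (d q : ℕ) (hq : 0 < q)
    (Ω : Set (Euc d)) (hΩo : IsOpen Ω) (hΩb : Bornology.IsBounded Ω)
    (NY : ℝ → ℕ) (Y : (h : ℝ) → Fin (NY h) → Euc d) (w : (h : ℝ) → Fin (NY h) → ℝ)
    (hYmem : ∀ h > (0:ℝ), ∀ i, Y h i ∈ closure Ω)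
    (Cw : ℝ)
    (hQconv : ∀ h > (0:ℝ), ∀ v : Euc d → ℝ, MemCq Ω q v →
      |(∫ y in Ω, v y) - ∑ i, w h i * v (Y h i)| ≤ Cw * h ^ q * CqNorm Ω q v) :
    ∀ r > (0:ℝ), ∃ h₀ > (0:ℝ), ∀ h : ℝ, 0 < h → h < h₀ → ∀ z : Euc d,
      Metric.ball z r ⊆ Ω → ∃ i, Y h i ∈ Metric.ball z r := by
  intro r hr
  let φ : ContDiffBump (0 : Euc d) := ⟨r / 2, r, by positivity, by linarith⟩
  have hs : ContDiff ℝ (⊤ : ℕ∞) φ := φ.contDiff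
  have hc : HasCompactSupport φ := φ.hasCompactSupport
  have hI : 0 < ∫ x, φ x := φ.integral_pos
  set I := ∫ x, φ x with hIdef
  set M := CqNorm univ q φ with hMdef
  have hM : 0 ≤ M := CqNorm_nonneg _ _ _
  have hK : 0 < |Cw| * M + 1 := by positivity
  refine ⟨min 1 (I / (|Cw| * M + 1)), by positivity, ?_⟩
  intro h hh hlt z hz
  by_contra! hno
  obtain ⟨h1, h2⟩ := lt_min_iff.mp hlt
  have hsupp : ∀ x, x ∉ Metric.ball z r → φ (x - z) = 0 := by
    intro x hx
    apply φ.zero_of_le_dist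
    simpa [dist_eq_norm] using hx
  have hvs : ContDiff ℝ (⊤ : ℕ∞) (fun x => φ (x - z)) :=
    hs.comp (contDiff_id.sub contDiff_const)
  have hvc : HasCompactSupport (fun x => φ (x - z)) :=
    hc.comp_homeomorph (Homeomorph.subRight z)
  have hest := hQconv h hh _ (memCq_of_smooth_compact Ω q hvs hvc)
  have hint : ∫ y in Ω, φ (y - z) = I := by
    rw [setIntegral_eq_integral_of_forall_compl_eq_zero
      (fun x hx => hsupp x fun hx' => hx (hz hx')), integral_sub_right_eq_self (fun x => φ x) z]
  have hsum : ∑ i, w h i * φ (Y h i - z) = 0 :=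
    Finset.sum_eq_zero fun i _ => by rw [hsupp _ (hno i), mul_zero]
  rw [hint, hsum, sub_zero, abs_of_pos hI] at hest
  have hN := CqNorm_translate_le Ω q hs hc z
  have hN0 : 0 ≤ CqNorm Ω q (fun x => φ (x - z)) := CqNorm_nonneg _ _ _
  have hpow : h ^ q ≤ h := pow_le_of_le_one hh.le h1.le hq.ne'
  have hchain : I ≤ |Cw| * h * M := by
    refine hest.trans ?_
    gcongr
    exact le_abs_self Cw
  rw [lt_div_iff₀ hK] at h2
  nlinarith

end
end
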